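/- arXiv:1207.6524 — 4 statements merged into one kernel-verified Lean document; each statement's English description precedes it below -/
import Mathlib

section
/- Let n ≥ 1 and N ≥ 1 with N and n+1 coprime. For every v : ZMod N → (Fin n → ℝ) there exists a unique M : ZMod N → Matrix (Fin (n+1)) (Fin (n+1)) ℝ such that for every s ∈ ZMod N: (i) trace(M_s) = 0; (ii) (M_s)_{i,n+1} = v^i_s for i = 1,…,n; and (iii) every entry of M_{s+1}·K_s − K_s·M_s in rows 1,…,n vanishes, and its (n+1, n) entry vanishes. -/
/-- The matrix `K_s` (rows and columns `1,…,n+1` of the paper correspond to the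
Lean indices `0,…,n`): `(K_s)_{1,n+1} = (−1)^n`, `(K_s)_{i,i−1} = 1` for `i = 2,…,n`,
`(K_s)_{n+1,j} = k^{j+1}_s` for `j = 1,…,n−1`, `(K_s)_{n+1,n} = 1`,
`(K_s)_{n+1,n+1} = k^1_s`, all other entries `0`. -/
noncomputable def Kmat {n N : ℕ} (k : ZMod N → Fin n → ℝ) (s : ZMod N) :
    Matrix (Fin (n + 1)) (Fin (n + 1)) ℝ :=
  Matrix.of fun i j =>
    (if (i : ℕ) = 0 ∧ (j : ℕ) = n then (-1 : ℝ) ^ n else 0)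
    + (if 1 ≤ (i : ℕ) ∧ (i : ℕ) ≤ n - 1 ∧ (j : ℕ) + 1 = (i : ℕ) then 1 else 0)
    + (if (i : ℕ) = n ∧ (j : ℕ) + 2 ≤ n then
        ∑ m : Fin n, (if (m : ℕ) = (j : ℕ) + 1 then k s m else 0) else 0)
    + (if (i : ℕ) = n ∧ (j : ℕ) + 1 = n then 1 else 0)
    + (if (i : ℕ) = n ∧ (j : ℕ) = n then
        ∑ m : Fin n, (if (m : ℕ) = 0 then k s m else 0) else 0)

/-!
The unknown entries of `M` satisfy a square linear system: the equations above the last row, the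
last column and the traces. So it suffices to show that the homogeneous system has only the zero
solution. Above the last row the equations relate `M (s + 1) (i + 1) (j + 1)` to `M s i j` by a
nonzero factor, so the vanishing of the last column spreads along the cyclic diagonals and makes
every `M s` diagonal. The `(last, last - 1)` entry of `M (s + 1) * K s - K s * M s` is a
multiple of `(M (s + 1)).trace - (M s).trace`, hence zero, so the diagonal entries satisfy
`M (s + 1) (i + 1) (i + 1) = M s i i` for every `i`. By the Chinese remainder theorem `(1, 1)`
generates the pairs `(s, i)`, so each `M s` is scalar, and trace zero forces it to vanish.
-/

theorem eq_of_periodic_one {α : Type*} {N m : ℕ} (hco : N.Coprime m) {f : ZMod N × ZMod m → α}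
    (hf : Function.Periodic f 1) (x y : ZMod N × ZMod m) : f x = f y := by
  obtain ⟨a, ha⟩ := ZMod.intCast_surjective ((ZMod.chineseRemainder hco).symm (x - y))
  have hxy : x = y + a * 1 := by
    rw [mul_one, ← map_intCast (ZMod.chineseRemainder hco), ha, RingEquiv.apply_symm_apply,
      add_sub_cancel]
  rw [hxy, hf.int_mul a y]

theorem eq_of_forall_apply_add_one_eq {α : Type*} {n : ℕ} {f : Fin (n + 1) → α}
    {a : Fin (n + 1)} (hf : ∀ i, i + 1 ≠ a → f (i + 1) = f i) (i j : Fin (n + 1)) :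
    f i = f j := by
  have eq_base (t : Fin (n + 1)) : f (a + t) = f a := by
    induction t using Fin.induction with
    | zero => rw [add_zero]
    | succ t ih =>
      have hsucc : a + t.succ = a + t.castSucc + 1 := by
        rw [add_assoc, Fin.coeSucc_eq_succ]
      have hne : a + t.castSucc + 1 ≠ a := by
        rw [← hsucc, Ne, add_eq_left]
        exact Fin.succ_ne_zero t
      rw [hsucc, hf _ hne, ih]
  rw [← add_sub_cancel a i, ← add_sub_cancel a j, eq_base, eq_base]

theorem eq_add_one_iff_val {n : ℕ} {i j : Fin (n + 1)} :
    i = j + 1 ↔ (i : ℕ) = 0 ∧ (j : ℕ) = n ∨ (i : ℕ) = j + 1 := by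
  simp only [Fin.ext_iff, Fin.val_add_one, Fin.val_last]
  split_ifs <;> omega

theorem last_sub_one_eq_mk {n : ℕ} (hn : 1 ≤ n) :
    Fin.last n - 1 = ⟨n - 1, by omega⟩ := by
  rw [sub_eq_iff_eq_add, eq_add_one_iff_val, Fin.val_last]
  dsimp only
  omega

/-- Only the row `q` of `A * K - K * B` contributes to the trace of
`K⁻¹ * (A * K - K * B)`, and `K q p` times the column `q` of `K⁻¹` is the basis vector `p`. -/
theorem apply_eq_mul_trace_sub_trace {ι R : Type*} [Fintype ι] [DecidableEq ι] [CommRing R]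
    {A B K : Matrix ι ι R} {p q : ι} (hK : IsUnit K) (hcol : ∀ i, i ≠ q → K i p = 0)
    (hrow : ∀ i, i ≠ q → ∀ j, (A * K - K * B) i j = 0) :
    (A * K - K * B) q p = K q p * (A.trace - B.trace) := by
  obtain ⟨U, rfl⟩ := hK
  set L : Matrix ι ι R := ↑U⁻¹
  set E : Matrix ι ι R := A * U - U * B
  have trace_mul : (L * E).trace = A.trace - B.trace := by
    rw [Matrix.mul_sub, Matrix.trace_sub, ← Matrix.mul_assoc, ← Matrix.mul_assoc,
      Matrix.trace_units_conj', Units.inv_mul, Matrix.one_mul]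
  have mul_diag (i : ι) : (L * E) i i = L i q * E q i := by
    rw [Matrix.mul_apply]
    exact Fintype.sum_eq_single q fun l hl => by rw [hrow l hl, mul_zero]
  have inverse_col (i : ι) : L i q * (U : Matrix ι ι R) q p = (1 : Matrix ι ι R) i p := by
    rw [← Units.inv_mul U, Matrix.mul_apply]
    symm
    exact Fintype.sum_eq_single q fun l hl => by rw [hcol l hl, mul_zero]
  calc E q p = ∑ i, (1 : Matrix ι ι R) i p * E q i := by simp [Matrix.one_apply]
    _ = (U : Matrix ι ι R) q p * ∑ i, L i q * E q i := by
        rw [Finset.mul_sum]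
        exact Finset.sum_congr rfl fun i _ => by rw [← inverse_col]; ring
    _ = (U : Matrix ι ι R) q p * (A.trace - B.trace) := by
        rw [← trace_mul, Matrix.trace]
        simp only [Matrix.diag_apply, mul_diag]

/-- A matrix of the shape of `Kmat` with arbitrary nonzero weights: above the last row only the
cyclic subdiagonal entries `(i + 1, i)` survive, and the whole cyclic subdiagonal is nonzero.
The index `i + 1` is cyclic, so the subdiagonal includes the top right corner `(0, last)`. -/
structure IsCyclicCompanion {R : Type*} [Zero R] {n : ℕ}
    (K : Matrix (Fin (n + 1)) (Fin (n + 1)) R) : Prop where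
  apply_eq_zero : ∀ {i j}, i ≠ Fin.last n → i ≠ j + 1 → K i j = 0
  apply_ne_zero : ∀ j, K (j + 1) j ≠ 0

namespace IsCyclicCompanion

section Semiring

variable {R : Type*} [NonUnitalNonAssocSemiring R] {n : ℕ}
  {K : Matrix (Fin (n + 1)) (Fin (n + 1)) R}

theorem mul_apply_add_one {m : Type*} (hK : IsCyclicCompanion K) (A : Matrix (Fin (n + 1)) m R)
    {i : Fin (n + 1)} (hi : i + 1 ≠ Fin.last n) (j : m) :
    (K * A) (i + 1) j = K (i + 1) i * A i j := by
  rw [Matrix.mul_apply]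
  refine Fintype.sum_eq_single i fun l hl => ?_
  rw [hK.apply_eq_zero hi fun h => hl (add_right_cancel h).symm, zero_mul]

theorem mul_apply_of_apply_last_eq_zero {m : Type*} (hK : IsCyclicCompanion K)
    {A : Matrix m (Fin (n + 1)) R} {i : m} (hi : A i (Fin.last n) = 0) (j : Fin (n + 1)) :
    (A * K) i j = A i (j + 1) * K (j + 1) j := by
  rw [Matrix.mul_apply]
  refine Fintype.sum_eq_single (j + 1) fun l hl => ?_
  by_cases hlast : l = Fin.last n
  · rw [hlast, hi, zero_mul]
  · rw [hK.apply_eq_zero hlast hl, mul_zero]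

end Semiring

section NoZeroDivisors

variable {n : ℕ}

theorem apply_add_one_add_one_of_isDiag {R : Type*} [CommRing R] [NoZeroDivisors R]
    {K A B : Matrix (Fin (n + 1)) (Fin (n + 1)) R} (hK : IsCyclicCompanion K)
    (hA : A.IsDiag) (hB : B.IsDiag) {i : Fin (n + 1)} (h : (A * K - K * B) (i + 1) i = 0) :
    A (i + 1) (i + 1) = B i i := by
  rw [← hA.diagonal_diag, ← hB.diagonal_diag, Matrix.sub_apply, Matrix.diagonal_mul,
    Matrix.mul_diagonal, Matrix.diag_apply, Matrix.diag_apply, mul_comm, ← mul_sub] at h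
  exact sub_eq_zero.mp ((mul_eq_zero.mp h).resolve_left (hK.apply_ne_zero i))

/-- On each cyclic diagonal `j = i + d` with `d ≠ 0` the entries vanish together, because the
recurrence links all of them except across row `last`; one of them lies in the last column. -/
theorem isDiag_of_apply_last_eq_zero {R : Type*} [Ring R] [NoZeroDivisors R] {N : ℕ}
    {K M : ZMod N → Matrix (Fin (n + 1)) (Fin (n + 1)) R} (hK : ∀ s, IsCyclicCompanion (K s))
    (hcol : ∀ s i, i ≠ Fin.last n → M s i (Fin.last n) = 0)
    (hrow : ∀ s i, i ≠ Fin.last n → ∀ j, (M (s + 1) * K s - K s * M s) i j = 0)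
    (s : ZMod N) : (M s).IsDiag := by
  have recurrence (s : ZMod N) (i j : Fin (n + 1)) (hi : i + 1 ≠ Fin.last n) :
      M (s + 1) (i + 1) (j + 1) * K s (j + 1) j = K s (i + 1) i * M s i j := by
    rw [← (hK s).mul_apply_of_apply_last_eq_zero (hcol (s + 1) (i + 1) hi),
      ← (hK s).mul_apply_add_one (M s) hi]
    exact sub_eq_zero.mp (hrow s (i + 1) hi j)
  have vanish_iff (i j : Fin (n + 1)) (hi : i + 1 ≠ Fin.last n) :
      (∀ s, M s (i + 1) (j + 1) = 0) ↔ ∀ s, M s i j = 0 := by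
    rw [← (Equiv.addRight (1 : ZMod N)).forall_congr_right]
    refine forall_congr' fun s => ?_
    rw [← mul_eq_zero_iff_right ((hK s).apply_ne_zero j), Equiv.coe_addRight,
      recurrence s i j hi, mul_eq_zero_iff_left ((hK s).apply_ne_zero i)]
  intro i j hij
  have hd : j - i ≠ 0 := sub_ne_zero.mpr hij.symm
  have diagonal_eq := eq_of_forall_apply_add_one_eq
    (f := fun l => ∀ s, M s l (l + (j - i)) = 0) (a := Fin.last n)
    (fun l hl => propext (by rw [add_right_comm, vanish_iff l _ hl]))
    i (Fin.last n - (j - i))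
  have hlast : ∀ s, M s (Fin.last n - (j - i)) (Fin.last n - (j - i) + (j - i)) = 0 := by
    intro s
    rw [sub_add_cancel]
    exact hcol s _ (by rwa [Ne, sub_eq_self])
  have hi := diagonal_eq.mpr hlast s
  rwa [add_sub_cancel] at hi

end NoZeroDivisors

section Field

variable {F : Type*} [Field F] {n : ℕ}

theorem isUnit {K : Matrix (Fin (n + 1)) (Fin (n + 1)) F} (hK : IsCyclicCompanion K) :
    IsUnit K := by
  rw [Matrix.isUnit_iff_isUnit_det, isUnit_iff_ne_zero]
  intro hdet
  obtain ⟨x, hx, hKx⟩ := Matrix.exists_mulVec_eq_zero_iff.mpr hdet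
  have eq_zero_of_ne (i : Fin (n + 1)) (hi : i + 1 ≠ Fin.last n) : x i = 0 := by
    have h := hK.mul_apply_add_one (Matrix.replicateCol Unit x) hi ()
    have hzero : K (i + 1) i * x i = 0 := h.symm.trans (congrFun hKx (i + 1))
    exact (mul_eq_zero.mp hzero).resolve_left (hK.apply_ne_zero i)
  refine hx (funext fun i => ?_)
  by_cases hi : i + 1 = Fin.last n
  · have hsum : K.mulVec x (i + 1) = K (i + 1) i * x i :=
      Fintype.sum_eq_single i fun l hl => by
        rw [eq_zero_of_ne l fun h => hl (add_right_cancel (h.trans hi.symm)), mul_zero]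
    rw [hKx] at hsum
    exact (mul_eq_zero.mp hsum.symm).resolve_left (hK.apply_ne_zero i)
  · exact eq_zero_of_ne i hi

theorem apply_last_eq_mul_trace_sub_trace {K A B : Matrix (Fin (n + 1)) (Fin (n + 1)) F}
    (hK : IsCyclicCompanion K)
    (hrow : ∀ i, i ≠ Fin.last n → ∀ j, (A * K - K * B) i j = 0) :
    (A * K - K * B) (Fin.last n) (Fin.last n - 1) =
      K (Fin.last n) (Fin.last n - 1) * (A.trace - B.trace) :=
  apply_eq_mul_trace_sub_trace hK.isUnit
    (fun _ hi => hK.apply_eq_zero hi (by rwa [sub_add_cancel])) hrow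

theorem eq_zero_of_trace_eq_zero {N : ℕ}
    {K M : ZMod N → Matrix (Fin (n + 1)) (Fin (n + 1)) F}
    (hF : (n + 1 : F) ≠ 0) (hco : N.Coprime (n + 1))
    (hK : ∀ s, IsCyclicCompanion (K s)) (htrace : ∀ s, (M s).trace = 0)
    (hcol : ∀ s i, i ≠ Fin.last n → M s i (Fin.last n) = 0)
    (hrow : ∀ s i, i ≠ Fin.last n → ∀ j, (M (s + 1) * K s - K s * M s) i j = 0) :
    M = 0 := by
  have hdiag := isDiag_of_apply_last_eq_zero hK hcol hrow
  have defect_subdiagonal (s : ZMod N) (i : Fin (n + 1)) :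
      (M (s + 1) * K s - K s * M s) (i + 1) i = 0 := by
    by_cases hi : i + 1 = Fin.last n
    · rw [hi, eq_sub_of_add_eq hi, (hK s).apply_last_eq_mul_trace_sub_trace (hrow s), htrace,
        htrace, sub_zero, mul_zero]
    · exact hrow s _ hi i
  -- `ZMod (n + 1)` unfolds to `Fin (n + 1)`, so the diagonal is a function on `ZMod N × ZMod _`.
  have diagonal_eq (s : ZMod N) (i j : Fin (n + 1)) : M s i i = M s j j :=
    eq_of_periodic_one (m := n + 1) hco (f := fun x => M x.1 x.2 x.2)
      (fun x => (hK x.1).apply_add_one_add_one_of_isDiag (hdiag _) (hdiag _)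
        (defect_subdiagonal x.1 x.2)) (s, i) (s, j)
  ext s i j
  by_cases hij : i = j
  · subst hij
    have hsum : (n + 1 : F) * M s i i = 0 := by
      simpa [Matrix.trace, fun l => diagonal_eq s l i] using htrace s
    exact (mul_eq_zero.mp hsum).resolve_left hF
  · exact hdiag s hij

end Field

end IsCyclicCompanion

/-- The linear system for the sequence `M`: at each `s`, the rows of `M (s + 1) * K s - K s * M s`
above the last one, the last column of `M s` above its last entry, and the trace of `M s`.
It has as many equations as unknowns. -/
def recursionSystem {R : Type*} [CommRing R] {n N : ℕ}
    (K : ZMod N → Matrix (Fin (n + 1)) (Fin (n + 1)) R) :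
    (ZMod N → Matrix (Fin (n + 1)) (Fin (n + 1)) R) →ₗ[R]
      (ZMod N → Matrix (Fin n) (Fin (n + 1)) R × (Fin n → R) × R) where
  toFun M s :=
    (Matrix.of fun i j => (M (s + 1) * K s - K s * M s) i.castSucc j,
      fun i => M s i.castSucc (Fin.last n), (M s).trace)
  map_add' M M' := by
    ext s <;> simp [Matrix.add_mul, Matrix.mul_add, add_sub_add_comm]
  map_smul' c M := by
    ext s <;> simp [mul_sub]

theorem recursionSystem_eq_iff {R : Type*} [CommRing R] {n N : ℕ}
    {K M : ZMod N → Matrix (Fin (n + 1)) (Fin (n + 1)) R} {v : ZMod N → Fin n → R} :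
    recursionSystem K M = (fun s => (0, v s, 0)) ↔
      ∀ s, (M s).trace = 0 ∧ (∀ i : Fin n, M s i.castSucc (Fin.last n) = v s i) ∧
        ∀ (i : Fin n) j, (M (s + 1) * K s - K s * M s) i.castSucc j = 0 := by
  rw [funext_iff]
  refine forall_congr' fun s => ?_
  simp only [recursionSystem, LinearMap.coe_mk, AddHom.coe_mk, Prod.mk.injEq, ← Matrix.ext_iff,
    funext_iff, Matrix.of_apply, Matrix.zero_apply]
  tauto

section Field

variable {F : Type*} [Field F] {n N : ℕ} {K : ZMod N → Matrix (Fin (n + 1)) (Fin (n + 1)) F}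

theorem recursionSystem_injective (hF : (n + 1 : F) ≠ 0) (hco : N.Coprime (n + 1))
    (hK : ∀ s, IsCyclicCompanion (K s)) : Function.Injective (recursionSystem K) := by
  refine (injective_iff_map_eq_zero _).mpr fun M hM => ?_
  have h := recursionSystem_eq_iff (v := 0).mp hM
  refine IsCyclicCompanion.eq_zero_of_trace_eq_zero hF hco hK (fun s => (h s).1) ?_ ?_
  · intro s i hi
    obtain ⟨i, rfl⟩ := Fin.exists_castSucc_eq.mpr hi
    exact (h s).2.1 i
  · intro s i hi
    obtain ⟨i, rfl⟩ := Fin.exists_castSucc_eq.mpr hi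
    exact (h s).2.2 i

theorem recursionSystem_bijective [NeZero N] (hF : (n + 1 : F) ≠ 0) (hco : N.Coprime (n + 1))
    (hK : ∀ s, IsCyclicCompanion (K s)) : Function.Bijective (recursionSystem K) := by
  have hinj := recursionSystem_injective hF hco hK
  have finrank_eq : Module.finrank F (ZMod N → Matrix (Fin (n + 1)) (Fin (n + 1)) F) =
      Module.finrank F (ZMod N → Matrix (Fin n) (Fin (n + 1)) F × (Fin n → F) × F) := by
    simp only [Module.finrank_pi_fintype, Module.finrank_matrix, Module.finrank_prod,
      Module.finrank_self, Finset.sum_const, Finset.card_univ, Fintype.card_fin, smul_eq_mul]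
    ring
  exact ⟨hinj, (LinearMap.injective_iff_surjective_of_finrank_eq_finrank finrank_eq).mp hinj⟩

theorem stmt_7_general [NeZero N] (hF : (n + 1 : F) ≠ 0) (hco : N.Coprime (n + 1))
    (hK : ∀ s, IsCyclicCompanion (K s)) (v : ZMod N → Fin n → F) :
    ∃! M : ZMod N → Matrix (Fin (n + 1)) (Fin (n + 1)) F,
      ∀ s : ZMod N,
        (M s).trace = 0 ∧
        (∀ i : Fin n, M s i.castSucc (Fin.last n) = v s i) ∧
        (∀ i : Fin n, ∀ j : Fin (n + 1),
          (M (s + 1) * K s - K s * M s) i.castSucc j = 0) ∧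
        (M (s + 1) * K s - K s * M s) (Fin.last n) (Fin.last n - 1) = 0 := by
  refine (existsUnique_congr fun M => ?_).mp
    ((recursionSystem_bijective hF hco hK).existsUnique fun s => (0, v s, 0))
  rw [recursionSystem_eq_iff]
  refine ⟨fun h s => ⟨(h s).1, (h s).2.1, (h s).2.2, ?_⟩,
    fun h s => ⟨(h s).1, (h s).2.1, (h s).2.2.1⟩⟩
  have hrow (i : Fin (n + 1)) (hi : i ≠ Fin.last n) :
      ∀ j, (M (s + 1) * K s - K s * M s) i j = 0 := by
    obtain ⟨i, rfl⟩ := Fin.exists_castSucc_eq.mpr hi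
    exact (h s).2.2 i
  rw [(hK s).apply_last_eq_mul_trace_sub_trace hrow, (h (s + 1)).1, (h s).1, sub_zero, mul_zero]

end Field

theorem Kmat_apply_add_one {n N : ℕ} (hn : 1 ≤ n) (k : ZMod N → Fin n → ℝ) (s : ZMod N)
    (j : Fin (n + 1)) : Kmat k s (j + 1) j = if j = Fin.last n then (-1) ^ n else 1 := by
  obtain ⟨i, hi⟩ : ∃ i, i = j + 1 := ⟨_, rfl⟩
  rw [← hi]
  rw [eq_add_one_iff_val] at hi
  simp only [Kmat, Matrix.of_apply, Fin.ext_iff, Fin.val_last]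
  split_ifs <;> first | omega | simp

theorem isCyclicCompanion_Kmat {n N : ℕ} (hn : 1 ≤ n) (k : ZMod N → Fin n → ℝ) (s : ZMod N) :
    IsCyclicCompanion (Kmat k s) where
  apply_eq_zero {i j} hi hij := by
    rw [Ne, eq_add_one_iff_val] at hij
    rw [Ne, Fin.ext_iff, Fin.val_last] at hi
    simp only [Kmat, Matrix.of_apply]
    repeat rw [if_neg (by omega)]
    simp only [add_zero]
  apply_ne_zero j := by
    rw [Kmat_apply_add_one hn]
    split_ifs
    · exact pow_ne_zero n (neg_ne_zero.mpr one_ne_zero)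
    · exact one_ne_zero

/-- given invariants `k` and an invariant vector `v`, there is a unique
sequence of trace-free matrices `M_s` whose last column (rows `1,…,n`) is `v_s` and
such that all entries in rows `1,…,n` of the structure expression
`M_{s+1}K_s − K_sM_s`, as well as its `(n+1,n)` entry, vanish. -/
theorem stmt_7 {n N : ℕ} [NeZero N] (hn : 1 ≤ n) (hco : Nat.Coprime N (n + 1))
    (k : ZMod N → Fin n → ℝ) (v : ZMod N → Fin n → ℝ) :
    ∃! M : ZMod N → Matrix (Fin (n + 1)) (Fin (n + 1)) ℝ,
      ∀ s : ZMod N,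
        (M s).trace = 0 ∧
        (∀ i : Fin n, M s i.castSucc (Fin.last n) = v s i) ∧
        (∀ i : Fin n, ∀ j : Fin (n + 1),
          (M (s + 1) * Kmat k s - Kmat k s * M s) i.castSucc j = 0) ∧
        (M (s + 1) * Kmat k s - Kmat k s * M s) (Fin.last n) ⟨n - 1, by omega⟩ = 0 := by
  simpa only [last_sub_one_eq_mk hn] using
    stmt_7_general (by positivity) hco (isCyclicCompanion_Kmat hn k) v
end

section
/- Let n ≥ 2 and N ≥ 1. On the open set U = { k : ZMod N → (Fin n → ℝ) | k^1_s ≠ 0 for all s }, define the vector fields X(k) = ℋ(k)(∇F(k)) and Y(k) = ℋ(k)(∇G(k)), where ∇F(k)^1_s = 1/k^1_s and ∇F(k)^i_s = 0 for i ≥ 2, and ∇G(k)^1_s = −k^2_{s+1}/((k^1_s)^2 k^1_{s+1}) − k^2_s/((k^1_s)^2 k^1_{s−1}), ∇G(k)^2_s = 1/(k^1_s k^1_{s−1}), ∇G(k)^i_s = 0 for i ≥ 3. Then the Lie bracket of X and Y vanishes on U: for every k ∈ U, (DY)(k)[X(k)] − (DX)(k)[Y(k)] = 0, where D denotes the Fréchet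 derivative of the map k ↦ X(k) (respectively k ↦ Y(k)) on the finite-dimensional space of maps ZMod N → (Fin n → ℝ). -/
/-- The operator `ℋ(k)` acting on sequences `θ : ZMod N → Fin n → ℝ`.
With the paper's components `i = 1,…,n` corresponding to the Lean indices
`0,…,n-1`, this is
`(ℋ(k)θ)^i_s = θ^{n+1−i}_{s+n+1−i} − θ^{n+1−i}_{s−i}
  + Σ_{j=1}^{n−i} ( k^{i+j}_{s+j} θ^j_{s+j} − k^{i+j}_s θ^j_{s−i} )`. -/
noncomputable def Hop {n N : ℕ} (k : ZMod N → Fin n → ℝ)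
    (θ : ZMod N → Fin n → ℝ) : ZMod N → Fin n → ℝ := fun s i =>
  (∑ m : Fin n, if (m : ℕ) + (i : ℕ) + 1 = n then
      θ (s + ((n - (i : ℕ) : ℕ) : ZMod N)) m
        - θ (s - (((i : ℕ) + 1 : ℕ) : ZMod N)) m
    else 0)
  + ∑ j : Fin n, ∑ m : Fin n, if (m : ℕ) = (i : ℕ) + (j : ℕ) + 1 then
      k (s + (((j : ℕ) + 1 : ℕ) : ZMod N)) m *
          θ (s + (((j : ℕ) + 1 : ℕ) : ZMod N)) j
        - k s m * θ (s - (((i : ℕ) + 1 : ℕ) : ZMod N)) j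
    else 0

/-- The gradient `∇F(k)` of the functional `F = Σ_s ln k^1_s`:
`∇F(k)^1_s = 1/k^1_s` and `∇F(k)^i_s = 0` for `i ≥ 2`. -/
noncomputable def gradF {n N : ℕ} (k : ZMod N → Fin n → ℝ) :
    ZMod N → Fin n → ℝ := fun s i =>
  if (i : ℕ) = 0 then 1 / k s i else 0

/-- The gradient `∇G(k)` of the functional `G = Σ_s k^2_{s+1}/(k^1_s k^1_{s+1})`:
`∇G(k)^1_s = −k^2_{s+1}/((k^1_s)^2 k^1_{s+1}) − k^2_s/((k^1_s)^2 k^1_{s−1})`,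
`∇G(k)^2_s = 1/(k^1_s k^1_{s−1})`, and `∇G(k)^i_s = 0` for `i ≥ 3`
(the components `k^1, k^2` are selected by indicator sums). -/
noncomputable def gradG {n N : ℕ} (k : ZMod N → Fin n → ℝ) :
    ZMod N → Fin n → ℝ := fun s j =>
  if (j : ℕ) = 0 then
    -((∑ m : Fin n, if (m : ℕ) = 1 then k (s + 1) m else 0) /
        ((k s j) ^ 2 * k (s + 1) j))
      - (∑ m : Fin n, if (m : ℕ) = 1 then k s m else 0) /
        ((k s j) ^ 2 * k (s - 1) j)
  else if (j : ℕ) = 1 then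
    1 / ((∑ m : Fin n, if (m : ℕ) = 0 then k s m else 0) *
         (∑ m : Fin n, if (m : ℕ) = 0 then k (s - 1) m else 0))
  else 0

/-!
Write `T` for the shift `(T f)(s) = f (s + 1)` and encode `k` in the difference operator
`Λ = k¹ T⁻¹ + ⋯ + kⁿ T⁻ⁿ + T⁻ⁿ⁻¹`. Modulo nonnegative powers of `T`, the operator `ℋ(k)` becomes
`ℋ(k)θ = [Σⱼ Tʲ θʲ, Λ]`, so that both fields have Lax form: `X = [P, Λ]` with `P = T (k¹)⁻¹` and
`Y = [Q, Λ]` with `Q = T ∇G¹ + T² ∇G²`. By the Jacobi identity they commute as soon as the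
zero-curvature equation `D_X Q - D_Y P = [P, Q]` holds. Its `T³` component says that `T (k¹)⁻¹` and
`T² ∇G²` commute, its `T²` component gives the derivative of `∇G²` along `X`, and its `T` component
says that the derivative of `∇G¹` along `X` is that of `(k¹)⁻¹` along `Y`.
-/

section ShiftCommutator

variable {Z R : Type*} [AddCommGroupWithOne Z] [CommRing R]

/-- The commutator `[Tᵈ a, Λ]` of difference operators, where `T` is the shift
`(T f)(s) = f (s + 1)` and `Λ = Σ_m K_m T⁻ᵐ⁻¹`, modulo nonnegative powers of `T`: its value at `m`
is the coefficient of `T⁻ᵐ⁻¹`. -/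
def shiftCommutator (d : ℕ) (a : Z → R) (K : ℕ → Z → R) : ℕ → Z → R := fun m s =>
  K (m + d) (s + d) * a (s + d) - K (m + d) s * a (s - (m + 1))

theorem shiftCommutator_zero_left (d : ℕ) (K : ℕ → Z → R) : shiftCommutator d 0 K = 0 := by
  funext m s
  simp [shiftCommutator]

theorem shiftCommutator_add_right (d : ℕ) (a : Z → R) (K L : ℕ → Z → R) :
    shiftCommutator d a (K + L) = shiftCommutator d a K + shiftCommutator d a L := by
  funext m s
  simp only [shiftCommutator, Pi.add_apply]
  ring

theorem shiftCommutator_jacobi (d e : ℕ) (a b : Z → R) (K : ℕ → Z → R) :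
    shiftCommutator d a (shiftCommutator e b K) - shiftCommutator e b (shiftCommutator d a K) =
      shiftCommutator (d + e) (fun z => b z * a (z - e) - a z * b (z - d)) K := by
  funext m s
  have cancel_e : s + d + e - e = s + d := by abel
  have cancel_d : s + d + e - d = s + e := by abel
  have reindex_d : s + d - (m + d + 1) = s - (m + 1) := by abel
  have reindex_e : s + e - (m + e + 1) = s - (m + 1) := by abel
  have shift_d : s - (m + 1) - d = s - (m + d + 1) := by abel
  have shift_e : s - (m + 1) - e = s - (m + e + 1) := by abel
  simp only [shiftCommutator, Pi.sub_apply, Nat.cast_add, ← add_assoc, add_right_comm m e d,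
    add_right_comm s (e : Z) d, cancel_e, cancel_d, reindex_d, reindex_e, shift_d, shift_e]
  ring

end ShiftCommutator

section LaxForm

variable {Z 𝕜 : Type*} [AddCommGroupWithOne Z] [Field 𝕜]

/-- The field `X` on the coefficients of an unrestricted `Λ = Σ_m K_m T⁻ᵐ⁻¹`; here `K 0` stands for
`k¹`. -/
def flowF (K : ℕ → Z → 𝕜) : ℕ → Z → 𝕜 := shiftCommutator 1 (K 0)⁻¹ K

/-- The component `∇G¹` in terms of the coefficients of `Λ`. -/
def gradGFst (K : ℕ → Z → 𝕜) : Z → 𝕜 := fun z =>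
  -(K 1 (z + 1) / (K 0 z ^ 2 * K 0 (z + 1))) - K 1 z / (K 0 z ^ 2 * K 0 (z - 1))

/-- The component `∇G²` in terms of the coefficients of `Λ`. -/
def gradGSnd (K : ℕ → Z → 𝕜) : Z → 𝕜 := fun z => 1 / (K 0 z * K 0 (z - 1))

/-- The field `Y` on the coefficients of an unrestricted `Λ = Σ_m K_m T⁻ᵐ⁻¹`. -/
def flowG (K : ℕ → Z → 𝕜) : ℕ → Z → 𝕜 :=
  shiftCommutator 1 (gradGFst K) K + shiftCommutator 2 (gradGSnd K) K

theorem shiftCommutator_gradGSnd_flowF (K : ℕ → Z → 𝕜) :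
    shiftCommutator 2 (gradGSnd K) (flowF K) =
      shiftCommutator 1 (K 0)⁻¹ (shiftCommutator 2 (gradGSnd K) K) := by
  rw [flowF, ← sub_eq_zero, shiftCommutator_jacobi]
  convert shiftCommutator_zero_left 3 K using 2
  funext z
  have sub_one_one : z - 1 - 1 = z - 2 := by rw [sub_sub, one_add_one_eq_two]
  simp only [gradGSnd, Pi.inv_apply, Pi.zero_apply, Nat.cast_one, Nat.cast_ofNat,
    sub_one_one]
  ring

theorem shiftCommutator_gradGFst_flowF (K : ℕ → Z → 𝕜) :
    shiftCommutator 1 (K 0)⁻¹ (shiftCommutator 1 (gradGFst K) K) -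
        shiftCommutator 1 (gradGFst K) (flowF K) =
      shiftCommutator 2
        (fun z => gradGFst K z * (K 0)⁻¹ (z - 1) - (K 0)⁻¹ z * gradGFst K (z - 1)) K := by
  simpa only [flowF, Nat.cast_one, one_add_one_eq_two] using
    shiftCommutator_jacobi 1 1 (K 0)⁻¹ (gradGFst K) K

end LaxForm

section Derivatives

variable {Z 𝕜 : Type*} [AddCommGroupWithOne Z] [NontriviallyNormedField 𝕜]
  {K : 𝕜 → ℕ → Z → 𝕜} {t : 𝕜}

theorem hasDerivAt_shiftCommutator {a : 𝕜 → Z → 𝕜} {a' : Z → 𝕜} {K' : ℕ → Z → 𝕜} (d : ℕ)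
    (ha : ∀ s, HasDerivAt (a · s) (a' s) t) (hK : ∀ m s, HasDerivAt (K · m s) (K' m s) t)
    (m : ℕ) (s : Z) :
    HasDerivAt (fun τ => shiftCommutator d (a τ) (K τ) m s)
      (shiftCommutator d a' (K t) m s + shiftCommutator d (a t) K' m s) t := by
  refine (((hK (m + d) (s + d)).fun_mul (ha (s + d))).fun_sub
    ((hK (m + d) s).fun_mul (ha (s - (m + 1))))).congr_deriv ?_
  simp only [shiftCommutator]
  ring

theorem hasDerivAt_flowF {K' : ℕ → Z → 𝕜} (hK : ∀ m s, HasDerivAt (K · m s) (K' m s) t)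
    (hK₀ : ∀ s, K t 0 s ≠ 0) (m : ℕ) (s : Z) :
    HasDerivAt (fun τ => flowF (K τ) m s)
      ((shiftCommutator 1 (-K' 0 / K t 0 ^ 2) (K t) + shiftCommutator 1 (K t 0)⁻¹ K') m s) t :=
  hasDerivAt_shiftCommutator 1 (fun s => (hK 0 s).inv (hK₀ s)) hK m s

theorem hasDerivAt_gradGSnd_along_flowF (hK : ∀ s, HasDerivAt (K · 0 s) (flowF (K t) 0 s) t)
    (hK₀ : ∀ s, K t 0 s ≠ 0) (z : Z) :
    HasDerivAt (fun τ => gradGSnd (K τ) z)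
      (gradGFst (K t) z * (K t 0)⁻¹ (z - 1) - (K t 0)⁻¹ z * gradGFst (K t) (z - 1)) t := by
  have quotient_rule := (hasDerivAt_const t (1 : 𝕜)).fun_div
    ((hK z).fun_mul (hK (z - 1))) (mul_ne_zero (hK₀ z) (hK₀ (z - 1)))
  refine quotient_rule.congr_deriv ?_
  simp only [flowF, gradGFst, shiftCommutator, Pi.inv_apply, zero_mul, one_mul, zero_add, zero_sub,
    Nat.cast_zero, Nat.cast_one, sub_add_cancel]
  field_simp [hK₀]
  ring

theorem hasDerivAt_gradGFst_along_flowF (hK : ∀ m s, HasDerivAt (K · m s) (flowF (K t) m s) t)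
    (hK₀ : ∀ s, K t 0 s ≠ 0) (z : Z) :
    HasDerivAt (fun τ => gradGFst (K τ) z) ((-flowG (K t) 0 / K t 0 ^ 2) z) t := by
  have quotient_rule (x y : Z) := (hK 1 x).fun_div (((hK 0 z).fun_pow 2).fun_mul (hK 0 y))
    (mul_ne_zero (pow_ne_zero 2 (hK₀ z)) (hK₀ y))
  refine ((quotient_rule (z + 1) (z + 1)).fun_neg.fun_sub
    (quotient_rule z (z - 1))).congr_deriv ?_
  have add_one_one : z + 1 + 1 = z + 2 := by rw [add_assoc, one_add_one_eq_two]
  have add_two_sub : z + 2 - 1 = z + 1 := by rw [← add_one_one, add_sub_cancel_right]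
  have add_one_sub : z + 1 - (1 + 1) = z - 1 := by abel
  have sub_one_one : z - (1 + 1) = z - 1 - 1 := by abel
  simp only [flowF, flowG, gradGFst, gradGSnd, shiftCommutator, Pi.inv_apply, Pi.add_apply,
    Pi.neg_apply, Pi.div_apply, Pi.pow_apply, Nat.reduceAdd, Nat.add_one_sub_one, zero_add, pow_one,
    Nat.cast_zero, Nat.cast_one, Nat.cast_ofNat, add_sub_cancel_right, sub_add_cancel, add_one_one,
    add_two_sub, add_one_sub, sub_one_one]
  field_simp [hK₀]
  ring

theorem hasDerivAt_flowG_along_flowF (hK : ∀ m s, HasDerivAt (K · m s) (flowF (K t) m s) t)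
    (hK₀ : ∀ s, K t 0 s ≠ 0) (m : ℕ) (s : Z) :
    HasDerivAt (fun τ => flowG (K τ) m s)
      ((shiftCommutator 1 (-flowG (K t) 0 / K t 0 ^ 2) (K t) +
        shiftCommutator 1 (K t 0)⁻¹ (flowG (K t))) m s) t := by
  have flowG_split : shiftCommutator 1 (K t 0)⁻¹ (flowG (K t)) =
      shiftCommutator 1 (K t 0)⁻¹ (shiftCommutator 1 (gradGFst (K t)) (K t)) +
        shiftCommutator 1 (K t 0)⁻¹ (shiftCommutator 2 (gradGSnd (K t)) (K t)) :=
    shiftCommutator_add_right ..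
  have hFst := hasDerivAt_shiftCommutator 1 (hasDerivAt_gradGFst_along_flowF hK hK₀) hK m s
  have hSnd := hasDerivAt_shiftCommutator 2 (hasDerivAt_gradGSnd_along_flowF (hK 0) hK₀) hK m s
  refine (hFst.fun_add hSnd).congr_deriv ?_
  rw [← shiftCommutator_gradGFst_flowF, shiftCommutator_gradGSnd_flowF, flowG_split]
  simp only [Pi.sub_apply, Pi.add_apply]
  ring

variable {E : Type*} [NormedAddCommGroup E] [NormedSpace 𝕜 E] {L : E → ℕ → Z → 𝕜} {x : E}

theorem differentiableAt_flowF (hL : ∀ m s, DifferentiableAt 𝕜 (L · m s) x)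
    (hL₀ : ∀ s, L x 0 s ≠ 0) (m : ℕ) (s : Z) :
    DifferentiableAt 𝕜 (fun w => flowF (L w) m s) x := by
  simp only [flowF, shiftCommutator, Pi.inv_apply]
  fun_prop (disch := simp [hL₀])

theorem differentiableAt_flowG (hL : ∀ m s, DifferentiableAt 𝕜 (L · m s) x)
    (hL₀ : ∀ s, L x 0 s ≠ 0) (m : ℕ) (s : Z) :
    DifferentiableAt 𝕜 (fun w => flowG (L w) m s) x := by
  simp only [flowG, gradGFst, gradGSnd, shiftCommutator, Pi.add_apply]
  fun_prop (disch := simp [hL₀])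

theorem fderiv_apply_apply_eq {ι κ : Type*} [Finite ι] [Finite κ] {f : E → ι → κ → 𝕜}
    {v : E} {i : ι} {j : κ} {f' : 𝕜} (hf : ∀ i j, DifferentiableAt 𝕜 (f · i j) x)
    (h : HasDerivAt (fun t : 𝕜 => f (x + t • v) i j) f' 0) : fderiv 𝕜 f x v i j = f' := by
  have := Fintype.ofFinite ι
  have := Fintype.ofFinite κ
  have hf' : DifferentiableAt 𝕜 f x :=
    differentiableAt_pi.2 fun i => differentiableAt_pi.2 fun j => hf i j
  have hline : HasDerivAt (fun t : 𝕜 => f (x + t • v)) (fderiv 𝕜 f x v) 0 :=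
    hf'.hasFDerivAt.hasLineDerivAt v
  exact (hasDerivAt_pi.1 (hasDerivAt_pi.1 hline i) j).unique h

end Derivatives

section LaxOperator

variable {n : ℕ} {Z R 𝕜 : Type*}

/-- The coefficients of `Λ = k¹ T⁻¹ + ⋯ + kⁿ T⁻ⁿ + T⁻ⁿ⁻¹`, that of `T⁻ᵐ⁻¹` having index `m`. -/
def laxCoeff [Zero R] [One R] (w : Z → Fin n → R) : ℕ → Z → R := fun m s =>
  if h : m < n then w s ⟨m, h⟩ else if m = n then 1 else 0

/-- The derivative of `laxCoeff` in the direction `v`: the coefficients beyond the `n`-th are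
constant. -/
def laxTangent [Zero R] (v : Z → Fin n → R) : ℕ → Z → R := fun m s =>
  if h : m < n then v s ⟨m, h⟩ else 0

theorem laxCoeff_of_lt [Zero R] [One R] {m : ℕ} (h : m < n) (w : Z → Fin n → R) (s : Z) :
    laxCoeff w m s = w s ⟨m, h⟩ :=
  dif_pos h

theorem laxCoeff_of_gt [Zero R] [One R] {m : ℕ} (h : n < m) (w : Z → Fin n → R) :
    laxCoeff w m = 0 := by
  funext s
  simp [laxCoeff, h.ne', h.not_gt]

theorem laxTangent_apply [Zero R] (v : Z → Fin n → R) (s : Z) (i : Fin n) :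
    laxTangent v i s = v s i :=
  dif_pos i.2

theorem laxCoeff_add_smul [Semiring R] (w v : Z → Fin n → R) (t : R) (m : ℕ) (s : Z) :
    laxCoeff (w + t • v) m s = laxCoeff w m s + t * laxTangent v m s := by
  simp only [laxCoeff, laxTangent]
  split_ifs <;> simp

theorem hasDerivAt_laxCoeff [NontriviallyNormedField 𝕜] (w v : Z → Fin n → 𝕜) (t : 𝕜)
    (m : ℕ) (s : Z) :
    HasDerivAt (fun τ : 𝕜 => laxCoeff (w + τ • v) m s) (laxTangent v m s) t := by
  simp only [laxCoeff_add_smul]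
  exact (hasDerivAt_mul_const _).const_add _

theorem differentiable_laxCoeff [NontriviallyNormedField 𝕜] [Finite Z] (m : ℕ) (s : Z) :
    Differentiable 𝕜 (fun w : Z → Fin n → 𝕜 => laxCoeff w m s) := by
  have := Fintype.ofFinite Z
  simp only [laxCoeff]
  split_ifs <;> fun_prop

end LaxOperator

section LaxRepresentation

variable {n N : ℕ}

theorem sum_ite_val_eq {M : Type*} [AddCommMonoid M] (f : Fin n → M) (p : ℕ) :
    (∑ m : Fin n, if (m : ℕ) = p then f m else 0) = if h : p < n then f ⟨p, h⟩ else 0 := by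
  split_ifs with h
  · lift p to Fin n using h
    simp [Fin.val_inj]
  · exact Finset.sum_eq_zero fun m _ => if_neg (by omega)

theorem Hop_apply (w θ : ZMod N → Fin n → ℝ) (s : ZMod N) (i : Fin n) :
    Hop w θ s i = ∑ j : Fin n, shiftCommutator (j + 1) (θ · j) (laxCoeff w) i s := by
  rw [Hop, ← Finset.sum_add_distrib]
  refine Finset.sum_congr rfl fun j _ => ?_
  rw [sum_ite_val_eq]
  rcases lt_trichotomy ((i : ℕ) + (j + 1)) n with h | h | h
  · have h' : (j : ℕ) + (i + 1) ≠ n := by omega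
    simp [shiftCommutator, laxCoeff, h, h', add_assoc]
  · have h' : (j : ℕ) + i + 1 = n := by omega
    have hj : n - (i : ℕ) = j + 1 := by omega
    simp [shiftCommutator, laxCoeff, h, h', hj, add_assoc]
  · have h' : (j : ℕ) + (i + 1) ≠ n := by omega
    simp [shiftCommutator, laxCoeff_of_gt h, h', h.not_gt, add_assoc]

theorem laxTangent_Hop (w θ : ZMod N → Fin n → ℝ) :
    laxTangent (Hop w θ) = ∑ j : Fin n, shiftCommutator (j + 1) (θ · j) (laxCoeff w) := by
  funext m s
  rw [Finset.sum_apply, Finset.sum_apply, laxTangent]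
  split_ifs with h
  · exact Hop_apply w θ s ⟨m, h⟩
  · refine (Finset.sum_eq_zero fun j _ => ?_).symm
    simp [shiftCommutator, laxCoeff_of_gt (show n < m + (j + 1) by omega)]

theorem laxTangent_Hop_gradF (hn : 0 < n) (w : ZMod N → Fin n → ℝ) :
    laxTangent (Hop w (gradF w)) = flowF (laxCoeff w) := by
  have zeroth : (gradF w · ⟨0, hn⟩) = (laxCoeff w 0)⁻¹ := by
    funext z
    simp [gradF, laxCoeff_of_lt hn]
  have higher (j : Fin n) (hj : j ≠ ⟨0, hn⟩) : (gradF w · j) = 0 := by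
    funext z
    simp [gradF, Fin.val_ne_iff.2 hj]
  rw [laxTangent_Hop, Fintype.sum_eq_single ⟨0, hn⟩, zeroth, flowF]
  intro j hj
  rw [higher j hj, shiftCommutator_zero_left]

theorem laxTangent_Hop_gradG (hn : 1 < n) (w : ZMod N → Fin n → ℝ) :
    laxTangent (Hop w (gradG w)) = flowG (laxCoeff w) := by
  have hn₀ : 0 < n := by omega
  have zeroth : (gradG w · ⟨0, hn₀⟩) = gradGFst (laxCoeff w) := by
    funext z
    simp [gradG, gradGFst, sum_ite_val_eq, laxCoeff_of_lt, hn₀, hn]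
  have first : (gradG w · ⟨1, hn⟩) = gradGSnd (laxCoeff w) := by
    funext z
    simp [gradG, gradGSnd, sum_ite_val_eq, laxCoeff_of_lt, hn₀]
  have higher (j : Fin n) (hj : j ≠ ⟨0, hn₀⟩ ∧ j ≠ ⟨1, hn⟩) : (gradG w · j) = 0 := by
    funext z
    simp [gradG, Fin.val_ne_iff.2 hj.1, Fin.val_ne_iff.2 hj.2]
  rw [laxTangent_Hop, Fintype.sum_eq_add ⟨0, hn₀⟩ ⟨1, hn⟩ (by simp), zeroth, first, flowG]
  intro j hj
  rw [higher j hj, shiftCommutator_zero_left]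

theorem Hop_gradF_apply (hn : 0 < n) (w : ZMod N → Fin n → ℝ) (s : ZMod N) (i : Fin n) :
    Hop w (gradF w) s i = flowF (laxCoeff w) i s := by
  rw [← laxTangent_Hop_gradF hn, laxTangent_apply]

theorem Hop_gradG_apply (hn : 1 < n) (w : ZMod N → Fin n → ℝ) (s : ZMod N) (i : Fin n) :
    Hop w (gradG w) s i = flowG (laxCoeff w) i s := by
  rw [← laxTangent_Hop_gradG hn, laxTangent_apply]

variable [NeZero N] {k : ZMod N → Fin n → ℝ}

theorem fderiv_Hop_gradF (hn : 0 < n) (hk : ∀ s, laxCoeff k 0 s ≠ 0)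
    (v : ZMod N → Fin n → ℝ) (s : ZMod N) (i : Fin n) :
    fderiv ℝ (fun w : ZMod N → Fin n → ℝ => Hop w (gradF w)) k v s i =
      (shiftCommutator 1 (-laxTangent v 0 / laxCoeff k 0 ^ 2) (laxCoeff k) +
        shiftCommutator 1 (laxCoeff k 0)⁻¹ (laxTangent v)) i s := by
  apply fderiv_apply_apply_eq <;> simp only [Hop_gradF_apply hn]
  · exact fun s i =>
      differentiableAt_flowF (fun m s => (differentiable_laxCoeff m s).differentiableAt) hk i s
  · simpa only [zero_smul, add_zero] using
      hasDerivAt_flowF (K := fun τ : ℝ => laxCoeff (k + τ • v)) (t := 0)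
        (hasDerivAt_laxCoeff k v 0) (by simpa only [zero_smul, add_zero] using hk) i s

theorem fderiv_Hop_gradG_along_gradF (hn : 1 < n) (hk : ∀ s, laxCoeff k 0 s ≠ 0)
    (s : ZMod N) (i : Fin n) :
    fderiv ℝ (fun w : ZMod N → Fin n → ℝ => Hop w (gradG w)) k (Hop k (gradF k)) s i =
      (shiftCommutator 1 (-flowG (laxCoeff k) 0 / laxCoeff k 0 ^ 2) (laxCoeff k) +
        shiftCommutator 1 (laxCoeff k 0)⁻¹ (flowG (laxCoeff k))) i s := by
  have hX := hasDerivAt_laxCoeff k (Hop k (gradF k)) 0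
  rw [laxTangent_Hop_gradF (by omega)] at hX
  apply fderiv_apply_apply_eq <;> simp only [Hop_gradG_apply hn]
  · exact fun s i =>
      differentiableAt_flowG (fun m s => (differentiable_laxCoeff m s).differentiableAt) hk i s
  · simpa only [zero_smul, add_zero] using
      hasDerivAt_flowG_along_flowF (K := fun τ : ℝ => laxCoeff (k + τ • Hop k (gradF k))) (t := 0)
        (by simpa only [zero_smul, add_zero] using hX)
        (by simpa only [zero_smul, add_zero] using hk) i s

end LaxRepresentation

/-- the Hamiltonian vector fields `X(k) = ℋ(k)∇F(k)` and
`Y(k) = ℋ(k)∇G(k)` commute on the open set `{k : k^1_s ≠ 0 ∀s}`: their Lie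
bracket `(DY)(k)[X(k)] − (DX)(k)[Y(k)]` vanishes. -/
theorem stmt_11 {n N : ℕ} [NeZero N] (hn : 2 ≤ n)
    (k : ZMod N → Fin n → ℝ) (hk : ∀ s, k s ⟨0, by omega⟩ ≠ 0) :
    (fderiv ℝ (fun w : ZMod N → Fin n → ℝ => Hop w (gradG w)) k)
        (Hop k (gradF k))
      - (fderiv ℝ (fun w : ZMod N → Fin n → ℝ => Hop w (gradF w)) k)
        (Hop k (gradG k)) = 0 := by
  have hk' (s : ZMod N) : laxCoeff k 0 s ≠ 0 := by
    rw [laxCoeff_of_lt]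
    exact hk s
  rw [sub_eq_zero]
  funext s i
  rw [fderiv_Hop_gradG_along_gradF hn hk', fderiv_Hop_gradF (by omega) hk', laxTangent_Hop_gradG hn]
end

section
/- The operators 𝒫₁ and 𝒫₂ form a Hamiltonian pair: for all μ, ν ∈ ℝ and all a, b : ZMod N → ℝ, the matrix W(a,b) of the operator μ𝒫₁(a,b) + ν𝒫₂(a,b), with entries W_{αβ} indexed by α, β in the disjoint union of two copies of ZMod N (one copy for the a-slots of the pair, one for the b-slots), is antisymmetric (W_{αβ} = −W_{βα}) and satisfies the coordinate Jacobi identity: for all triples of indices α, β, γ, Σ_δ ( W_{δα} · ∂W_{βγ}/∂x_δ + W_{δβ} · ∂W_{γα}/∂x_δ + W_{δγ} · ∂W_{αβ}/∂x_δ ) = 0 at every point (a,b), where x_δ runs over the coordinates a_r and b_r (r ∈ ZMod N). -/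
/-- The operator `𝒫₁(a,b)` (it only involves `a`):
`𝒫₁(θ,η) = (η_1 − η_{−2}, θ_2 − θ_{−1} + λ(a_1η_1 − aη_{−1}))`. -/
noncomputable def P1 {N : ℕ} (lam : ℝ) (a : ZMod N → ℝ)
    (θ η : ZMod N → ℝ) : (ZMod N → ℝ) × (ZMod N → ℝ) :=
  (fun s => η (s + 1) - η (s - 2),
   fun s => θ (s + 2) - θ (s - 1)
     + lam * (a (s + 1) * η (s + 1) - a s * η (s - 1)))

/-- The operator `𝒫₂(a,b)`, where `R` is the inverse of `𝒯 + 1 + 𝒯⁻¹`: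
`𝒫₂(θ,η) = ( b_{−1}θ_{−1} − bθ_1 + λa((𝒯−𝒯⁻¹)R(aθ)) + λa((1−𝒯⁻¹)R(bη)),
−λb((1−𝒯)R(aθ)) + λb((𝒯−𝒯⁻¹)R(bη)) )`. -/
noncomputable def P2 {N : ℕ} (lam : ℝ) (R : (ZMod N → ℝ) → (ZMod N → ℝ))
    (a b : ZMod N → ℝ) (θ η : ZMod N → ℝ) : (ZMod N → ℝ) × (ZMod N → ℝ) :=
  (fun s => b (s - 1) * θ (s - 1) - b s * θ (s + 1)
     + lam * a s * (R (fun r => a r * θ r) (s + 1) - R (fun r => a r * θ r) (s - 1))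
     + lam * a s * (R (fun r => b r * η r) s - R (fun r => b r * η r) (s - 1)),
   fun s => -(lam * b s * (R (fun r => a r * θ r) s - R (fun r => a r * θ r) (s + 1)))
     + lam * b s * (R (fun r => b r * η r) (s + 1) - R (fun r => b r * η r) (s - 1)))

/-- The coordinate basis vector of the phase space indexed by the disjoint union
`ZMod N ⊕ ZMod N` (first copy for the `a`/`θ`-slots, second for the `b`/`η`-slots). -/
noncomputable def basisPair {N : ℕ} (β : ZMod N ⊕ ZMod N) :
    (ZMod N → ℝ) × (ZMod N → ℝ) :=
  match β with
  | Sum.inl r => (Pi.single r 1, 0)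
  | Sum.inr r => (0, Pi.single r 1)

/-- The matrix `W(a,b)` of the operator `μ𝒫₁ + ν𝒫₂`, with entries indexed by the
disjoint union `ZMod N ⊕ ZMod N`. -/
noncomputable def Wmat {N : ℕ} (lam μ ν : ℝ)
    (R : (ZMod N → ℝ) → (ZMod N → ℝ)) (a b : ZMod N → ℝ)
    (α β : ZMod N ⊕ ZMod N) : ℝ :=
  let p := basisPair β
  match α with
  | Sum.inl s => μ * (P1 lam a p.1 p.2).1 s + ν * (P2 lam R a b p.1 p.2).1 s
  | Sum.inr s => μ * (P1 lam a p.1 p.2).2 s + ν * (P2 lam R a b p.1 p.2).2 s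

/-!
Interleave `a` and `b` into a single sequence `c = (…, a_s, b_s, a_{s+1}, b_{s+1}, …)` with shift
`σ`. The matrix of `μ𝒫₁ + ν𝒫₂` becomes one Poisson bracket, in which `{c_k, c_{σ²k}}` has a linear
part `ε_k c_{σk}`, `{c_k, c_{σ³k}}` has the constant part `μ`, and `{c_k, c_l}` has a quadratic part
`νλ F_{kl} c_k c_l`. Inverting `𝒯 + 1 + 𝒯⁻¹` amounts to the relation
`F_{σ²k,l} − F_{σk,l} + F_{kl} = δ_{σ²k,l} − δ_{kl}`, and the weights satisfy
`ε_k ε_{σk} = −μνλ`.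

The purely quadratic part of the Jacobi sum over `i, j, k` cancels by antisymmetry of `F`. The rest
splits into terms supported on pairs of indices linked by `σ²` or `σ³`. The relation for `F` and the
one for the weights reduce each of them to products of Kronecker deltas, which cancel by symmetry in
the alternating sum.
-/

/-- A Poisson structure on the functions `c : ι → R`, adapted to an injective shift `σ` of the
index set. It is made of
* a linear part `{c_k, c_{σ²k}} = ε_k c_{σk}`,
* a constant part `{c_k, c_{σ³k}} = τ`,
* a quadratic part `{c_k, c_l} = κ F_{kl} c_k c_l`.

The laws are compatibility conditions on these three parts that give the Jacobi identity. The
Kronecker delta is written as the identity matrix. -/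
structure ShiftBracket (ι R : Type*) [DecidableEq ι] [CommRing R] where
  σ : ι → ι
  F : ι → ι → R
  ε : ι → R
  κ : R
  τ : R
  shift_injective : σ.Injective
  kernel_antisymm : ∀ k l, F l k = -F k l
  kernel_shift : ∀ k l, F (σ (σ k)) l - F (σ k) l + F k l
    = (1 : Matrix ι ι R) (σ (σ k)) l - (1 : Matrix ι ι R) k l
  weight_shift_shift : ∀ k, ε (σ (σ k)) = ε k
  weight_mul_weight_shift : ∀ k, ε k * ε (σ k) = -(κ * τ)

namespace ShiftBracket

section Algebra

variable {ι R : Type*} [DecidableEq ι] [CommRing R]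

local notation "δ" => (1 : Matrix ι ι R)

lemma delta_mul_congr {k l : ι} {x y : R} (h : k = l → x = y) : δ k l * x = δ k l * y := by
  by_cases hkl : k = l
  · rw [h hkl]
  · simp [Matrix.one_apply_ne hkl]

lemma delta_mul_comm (f : ι → ι → R) (k l : ι) : δ k l * f k l = δ l k * f l k := by
  by_cases h : k = l
  · rw [h]
  · simp [Matrix.one_apply_ne h, Matrix.one_apply_ne (Ne.symm h)]

lemma delta_apply_apply {σ : ι → ι} (hσ : σ.Injective) (k l : ι) : δ (σ k) (σ l) = δ k l := by
  simp only [Matrix.one_apply, hσ.eq_iff]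

variable (P : ShiftBracket ι R) (c v : ι → R)

/-- The linear and constant parts of `{c_k, c_l}` that are supported on `l = σ²k` or `l = σ³k`;
the other half of these parts is its transpose. -/
def link (k l : ι) : R :=
  P.ε k * c (P.σ k) * δ (P.σ (P.σ k)) l + P.τ * δ (P.σ (P.σ (P.σ k))) l

/-- The Poisson bracket `{c_k, c_l}` of two coordinate functions, evaluated at `c`. -/
def bracket (k l : ι) : R :=
  P.link c k l - P.link c l k + P.κ * (c k * c l * P.F k l)

/-- The derivative of `c ↦ {c_k, c_l}` in the direction `v`. -/
def bracketDeriv (k l : ι) : R :=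
  P.ε k * v (P.σ k) * δ (P.σ (P.σ k)) l - P.ε l * v (P.σ l) * δ (P.σ (P.σ l)) k
    + P.κ * ((v k * c l + c k * v l) * P.F k l)

/-- The part of the Jacobi sum of `i, j, k` that is supported on `k = σ²j` or `k = σ³j`. -/
def linkedJacobiTerm (j k i : ι) : R :=
  P.ε j * δ (P.σ (P.σ j)) k * P.bracket c (P.σ j) i
    - P.κ * c i * (P.F j i + P.F k i) * P.link c j k

theorem bracket_antisymm (k l : ι) : P.bracket c k l = -P.bracket c l k := by
  simp only [bracket, P.kernel_antisymm k l]
  ring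

lemma kernel_add_kernel_shift_two (j i : ι) :
    P.F (P.σ (P.σ j)) i + P.F j i
      = P.F (P.σ j) i + δ (P.σ (P.σ j)) i - δ j i := by
  linear_combination P.kernel_shift j i

lemma kernel_add_kernel_shift_three (j i : ι) :
    P.F (P.σ (P.σ (P.σ j))) i + P.F j i
      = δ (P.σ (P.σ (P.σ j))) i + δ (P.σ (P.σ j)) i - δ (P.σ j) i - δ j i := by
  linear_combination P.kernel_shift j i + P.kernel_shift (P.σ j) i

lemma weight_mul_link_shift (j i : ι) :
    P.ε j * P.link c (P.σ j) i
      = P.τ * (P.ε j * δ (P.σ (P.σ (P.σ (P.σ j)))) i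
        - P.κ * c (P.σ (P.σ j)) * δ (P.σ (P.σ (P.σ j))) i) := by
  simp only [link]
  linear_combination
    c (P.σ (P.σ j)) * δ (P.σ (P.σ (P.σ j))) i * P.weight_mul_weight_shift j

lemma weight_mul_link_to_shift (i j : ι) :
    P.ε j * P.link c i (P.σ j)
      = P.τ * (P.ε i * δ (P.σ (P.σ i)) j - P.κ * c j * δ (P.σ i) j) := by
  have linear : δ (P.σ i) j * (P.ε i * P.ε j * c (P.σ i)) = δ (P.σ i) j * (-(P.κ * P.τ) * c j) := by
    refine delta_mul_congr ?_
    rintro rfl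
    rw [P.weight_mul_weight_shift]
  have constant : δ (P.σ (P.σ i)) j * P.ε j = δ (P.σ (P.σ i)) j * P.ε i := by
    refine delta_mul_congr ?_
    rintro rfl
    exact P.weight_shift_shift i
  simp only [link, delta_apply_apply P.shift_injective]
  linear_combination linear + P.τ * constant

lemma delta_mul_bracket_shift (j k i : ι) :
    δ (P.σ (P.σ j)) k
        * (P.ε j * (P.bracket c (P.σ j) i - P.κ * c (P.σ j) * c i * (P.F j i + P.F k i)))
      = δ (P.σ (P.σ j)) k
        * (P.κ * P.ε j * c (P.σ j) * c i * (δ j i - δ k i)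
          + P.τ * (P.ε j * δ (P.σ (P.σ k)) i - P.ε i * δ (P.σ (P.σ i)) j)
          - P.κ * P.τ * (c k * δ (P.σ k) i - c j * δ (P.σ i) j)) := by
  refine delta_mul_congr ?_
  rintro rfl
  simp only [bracket]
  linear_combination P.weight_mul_link_shift c j i - P.weight_mul_link_to_shift c i j
    - P.κ * P.ε j * c (P.σ j) * c i * P.kernel_add_kernel_shift_two j i

lemma delta_mul_kernel_add_kernel (j k i : ι) :
    δ (P.σ (P.σ (P.σ j))) k * (P.F j i + P.F k i)
      = δ (P.σ (P.σ (P.σ j))) k * (δ k i - δ j i)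
        + δ (P.σ (P.σ j)) i * δ (P.σ i) k - δ (P.σ j) i * δ (P.σ (P.σ i)) k := by
  have kernel : δ (P.σ (P.σ (P.σ j))) k * (P.F j i + P.F k i)
      = δ (P.σ (P.σ (P.σ j))) k * (δ k i - δ j i + δ (P.σ (P.σ j)) i - δ (P.σ j) i) := by
    refine delta_mul_congr ?_
    rintro rfl
    linear_combination P.kernel_add_kernel_shift_three j i
  have split_two_one :
      δ (P.σ (P.σ j)) i * δ (P.σ (P.σ (P.σ j))) k = δ (P.σ (P.σ j)) i * δ (P.σ i) k :=
    delta_mul_congr fun h => by rw [h]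
  have split_one_two :
      δ (P.σ j) i * δ (P.σ (P.σ (P.σ j))) k = δ (P.σ j) i * δ (P.σ (P.σ i)) k :=
    delta_mul_congr fun h => by rw [h]
  linear_combination kernel + split_two_one - split_one_two

-- Each summand on the right is symmetric in two of the indices `i, j, k`, or is a difference of
-- two cyclic shifts, so that it disappears in the alternating sum over `i, j, k`.
lemma linkedJacobiTerm_eq (j k i : ι) :
    P.linkedJacobiTerm c j k i
      = P.κ * (P.link c j k * c i * δ j i) - P.κ * (P.link c j k * c i * δ k i)
        + P.τ * (P.ε j * δ (P.σ (P.σ j)) k * δ (P.σ (P.σ k)) i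
          - P.ε i * δ (P.σ (P.σ i)) j * δ (P.σ (P.σ j)) k)
        - P.κ * P.τ * (c k * δ (P.σ (P.σ j)) k * δ (P.σ k) i
          + c i * δ (P.σ (P.σ j)) i * δ (P.σ i) k)
        + P.κ * P.τ * (c j * δ (P.σ i) j * δ (P.σ (P.σ j)) k
          + c i * δ (P.σ j) i * δ (P.σ (P.σ i)) k) := by
  simp only [linkedJacobiTerm, link]
  linear_combination P.delta_mul_bracket_shift c j k i
    - P.κ * P.τ * c i * P.delta_mul_kernel_add_kernel j k i

lemma cyclic_sum_bracketDeriv_bracket (i j k : ι) :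
    P.bracketDeriv c (P.bracket c · i) j k + P.bracketDeriv c (P.bracket c · j) k i
        + P.bracketDeriv c (P.bracket c · k) i j
      = P.linkedJacobiTerm c j k i - P.linkedJacobiTerm c k j i
        + P.linkedJacobiTerm c k i j - P.linkedJacobiTerm c i k j
        + P.linkedJacobiTerm c i j k - P.linkedJacobiTerm c j i k := by
  simp only [bracketDeriv, linkedJacobiTerm, bracket, P.kernel_antisymm i j,
    P.kernel_antisymm j k, P.kernel_antisymm k i]
  ring

theorem jacobi (i j k : ι) :
    P.bracketDeriv c (P.bracket c · i) j k + P.bracketDeriv c (P.bracket c · j) k i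
      + P.bracketDeriv c (P.bracket c · k) i j = 0 := by
  have source (i j k : ι) : δ j i * (P.link c j k * c i) = δ i j * (P.link c i k * c j) :=
    delta_mul_comm (fun j i => P.link c j k * c i) j i
  have target (i j k : ι) : δ k i * (P.link c j k * c i) = δ i k * (P.link c j i * c k) :=
    delta_mul_comm (fun k i => P.link c j k * c i) k i
  rw [cyclic_sum_bracketDeriv_bracket]
  simp only [linkedJacobiTerm_eq]
  linear_combination P.κ * (source i j k + source j k i + source k i j
    - target i j k - target j k i - target k i j)

end Algebra

section Calculus

variable {ι 𝕜 : Type*} [DecidableEq ι] [NontriviallyNormedField 𝕜]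

lemma fderiv_bracket_apply [Finite ι] (P : ShiftBracket ι 𝕜) (c v : ι → 𝕜) (k l : ι) :
    fderiv 𝕜 (fun c => P.bracket c k l) c v = P.bracketDeriv c v k l := by
  cases nonempty_fintype ι
  have coord (m : ι) :
      HasFDerivAt (fun c : ι → 𝕜 => c m) (ContinuousLinearMap.proj (R := 𝕜) m) c :=
    hasFDerivAt_apply m c
  have link_deriv (k l : ι) := (((coord (P.σ k)).const_mul (P.ε k)).mul_const
    ((1 : Matrix ι ι 𝕜) (P.σ (P.σ k)) l)).add_const
      (P.τ * (1 : Matrix ι ι 𝕜) (P.σ (P.σ (P.σ k))) l)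
  have quadratic := (((coord k).mul (coord l)).mul_const (P.F k l)).const_mul P.κ
  have bracket_deriv : HasFDerivAt (fun c => P.bracket c k l) _ c :=
    ((link_deriv k l).sub (link_deriv l k)).add quadratic
  rw [bracket_deriv.fderiv]
  simp only [bracketDeriv, add_apply, sub_apply, smul_apply,
    ContinuousLinearMap.proj_apply, smul_eq_mul]
  ring

variable [Fintype ι]

lemma sum_mul_apply_single (L : (ι → 𝕜) →L[𝕜] 𝕜) (v : ι → 𝕜) :
    ∑ d, v d * L (Pi.single d 1) = L v := by
  have scale (d : ι) : v d * L (Pi.single d 1) = L (Pi.single d (v d)) := by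
    rw [← smul_eq_mul, ← map_smul, ← Pi.single_smul, smul_eq_mul, mul_one]
  simp only [scale, ← map_sum, LinearMap.sum_single_apply]

theorem sum_bracket_mul_fderiv_bracket (P : ShiftBracket ι 𝕜) (c : ι → 𝕜) (i j k : ι) :
    ∑ d, (P.bracket c d i * fderiv 𝕜 (fun c => P.bracket c j k) c (Pi.single d 1)
      + P.bracket c d j * fderiv 𝕜 (fun c => P.bracket c k i) c (Pi.single d 1)
      + P.bracket c d k * fderiv 𝕜 (fun c => P.bracket c i j) c (Pi.single d 1)) = 0 := by
  simp only [Finset.sum_add_distrib, sum_mul_apply_single]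
  simp only [fderiv_bracket_apply, P.jacobi]

end Calculus

end ShiftBracket

section Inverse

variable {A K : Type*}

/-- The operator `𝒯 + 1 + 𝒯⁻¹`. -/
def neighborSum [AddGroupWithOne A] [Add K] (x : A → K) (s : A) : K :=
  x (s + 1) + x s + x (s - 1)

/-- An even fundamental solution of `𝒯 + 1 + 𝒯⁻¹`, that is, an even convolution kernel of the
inverse of that operator. -/
structure IsEvenGreenFunction [AddGroupWithOne A] [DecidableEq A] [Ring K] (ρ : A → K) :
    Prop where
  even : ∀ d, ρ (-d) = ρ d
  neighborSum_eq_single : neighborSum ρ = Pi.single 0 1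

variable [AddCommGroupWithOne A] [Ring K] {R : (A → K) → A → K}

lemma inverse_zero (leftInv : Function.LeftInverse R neighborSum) : R (fun _ => 0) = 0 := by
  have h : neighborSum (0 : A → K) = fun _ => 0 := by
    funext s
    simp [neighborSum]
  rw [← h, leftInv]

variable [DecidableEq A]

lemma isEvenGreenFunction_inverse_single (leftInv : Function.LeftInverse R neighborSum)
    (rightInv : Function.RightInverse R neighborSum) :
    IsEvenGreenFunction (R (Pi.single 0 1)) where
  neighborSum_eq_single := rightInv _
  even d := by
    suffices h : neighborSum (fun d => R (Pi.single 0 1) (-d)) = Pi.single 0 1 by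
      exact congrFun ((leftInv _).symm.trans (congrArg R h)) d
    funext s
    have h := congrFun (rightInv (Pi.single 0 1)) (-s)
    simp only [neighborSum, Pi.single_apply, neg_eq_zero] at h ⊢
    rw [← h, show -s + 1 = -(s - 1) by abel, show -s - 1 = -(s + 1) by abel]
    abel

lemma inverse_mul_single (leftInv : Function.LeftInverse R neighborSum) {ρ : A → K}
    (hρ : IsEvenGreenFunction ρ) (x : A → K) (r s : A) :
    R (fun t => x t * (Pi.single r 1 : A → K) t) s = x r * ρ (s - r) := by
  suffices h : neighborSum (fun s => x r * ρ (s - r)) = fun t => x t * (Pi.single r 1 : A → K) t by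
    rw [← h, leftInv]
  funext s
  have h := congrFun hρ.neighborSum_eq_single (s - r)
  simp only [neighborSum, Pi.single_apply, sub_eq_zero, add_sub_right_comm _ (1 : A) r,
    sub_right_comm _ (1 : A) r, ← mul_add] at h ⊢
  rw [h]
  split_ifs with hs
  · rw [hs]
  · simp only [mul_zero]

end Inverse

section Interleaving

variable {A K : Type*}

/-- The shift of the interleaved sequence `…, a_s, b_s, a_{s+1}, b_{s+1}, …`. -/
def interleavedShift [Add A] [One A] : A ⊕ A → A ⊕ A :=
  Sum.elim Sum.inr fun s => Sum.inl (s + 1)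

/-- The kernel of the quadratic part of `𝒫₂` on interleaved sequences: the difference of `ρ`
across an interval of length one or two. -/
def interleavedKernel [AddGroupWithOne A] [Sub K] (ρ : A → K) : A ⊕ A → A ⊕ A → K
  | .inl s, .inl r => ρ (s - r + 1) - ρ (s - r - 1)
  | .inl s, .inr r => ρ (s - r) - ρ (s - r - 1)
  | .inr s, .inl r => ρ (s - r + 1) - ρ (s - r)
  | .inr s, .inr r => ρ (s - r + 1) - ρ (s - r - 1)

variable [AddCommGroupWithOne A] [CommRing K] {ρ : A → K}

lemma interleavedShift_injective : (interleavedShift (A := A)).Injective := by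
  rintro (s | s) (r | r) h <;> simp_all [interleavedShift]

variable [DecidableEq A]

lemma interleavedKernel_antisymm (hρ : IsEvenGreenFunction ρ) (k l : A ⊕ A) :
    interleavedKernel ρ l k = -interleavedKernel ρ k l := by
  have reflect (s r : A) : ρ (r - s) = ρ (s - r) := by rw [← hρ.even, neg_sub]
  have reflect_add (s r : A) : ρ (r - s + 1) = ρ (s - r - 1) := by
    rw [← hρ.even]; congr 1; abel
  have reflect_sub (s r : A) : ρ (r - s - 1) = ρ (s - r + 1) := (reflect_add r s).symm
  rcases k with s | s <;> rcases l with r | r <;>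
    simp only [interleavedKernel, reflect s r, reflect_add s r, reflect_sub s r, neg_sub]

lemma interleavedKernel_shift (hρ : IsEvenGreenFunction ρ) (k l : A ⊕ A) :
    interleavedKernel ρ (interleavedShift (interleavedShift k)) l
        - interleavedKernel ρ (interleavedShift k) l + interleavedKernel ρ k l
      = (1 : Matrix (A ⊕ A) (A ⊕ A) K) (interleavedShift (interleavedShift k)) l
        - (1 : Matrix (A ⊕ A) (A ⊕ A) K) k l := by
  have third_difference (s r : A) :
      ρ (s - r + 1 + 1) - ρ (s - r - 1)
        = (if s + 1 = r then 1 else 0) - (if s = r then 1 else 0) := by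
    have h (d : A) := congrFun hρ.neighborSum_eq_single d
    simp only [neighborSum, Pi.single_apply] at h
    have next := h (s + 1 - r)
    have current := h (s - r)
    simp only [sub_eq_zero] at next current
    rw [add_sub_right_comm s 1 r, add_sub_cancel_right] at next
    linear_combination next - current
  rcases k with s | s <;> rcases l with r | r <;>
    simp only [interleavedShift, interleavedKernel, Sum.elim_inl, Sum.elim_inr,
      add_sub_right_comm s 1 r, add_sub_cancel_right, Matrix.one_apply, Sum.inl.injEq,
      Sum.inr.injEq, reduceCtorEq, if_false]
  · linear_combination third_difference s r
  · ring
  · ring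
  · linear_combination third_difference s r

/-- The bracket of the pencil `μ𝒫₁ + ν𝒫₂` on interleaved sequences. -/
def interleavedBracket (hρ : IsEvenGreenFunction ρ) (lam μ ν : K) : ShiftBracket (A ⊕ A) K where
  σ := interleavedShift
  F := interleavedKernel ρ
  ε := Sum.elim (fun _ => -ν) fun _ => μ * lam
  κ := ν * lam
  τ := μ
  shift_injective := interleavedShift_injective
  kernel_antisymm := interleavedKernel_antisymm hρ
  kernel_shift := interleavedKernel_shift hρ
  weight_shift_shift := by rintro (s | s) <;> rfl
  weight_mul_weight_shift := by
    rintro (s | s) <;> simp only [interleavedShift, Sum.elim_inl, Sum.elim_inr] <;> ring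

end Interleaving

section Pencil

variable {N : ℕ} {R : (ZMod N → ℝ) → ZMod N → ℝ} {ρ : ZMod N → ℝ}

lemma Wmat_eq_bracket (leftInv : Function.LeftInverse R neighborSum) (hρ : IsEvenGreenFunction ρ)
    (lam μ ν : ℝ) (a b : ZMod N → ℝ) (α β : ZMod N ⊕ ZMod N) :
    Wmat lam μ ν R a b α β
      = (interleavedBracket hρ lam μ ν).bracket (Sum.elim a b) α β := by
  have b_pred (s r : ZMod N) :
      b (s - 1) * (if r + 1 = s then 1 else 0) = b r * (if r + 1 = s then 1 else 0) := by
    split_ifs with h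
    · rw [← h, add_sub_cancel_right]
    · simp only [mul_zero]
  have a_succ (s r : ZMod N) :
      a (r + 1) * (if r + 1 = s then 1 else 0) = a s * (if r + 1 = s then 1 else 0) := by
    split_ifs with h
    · rw [h]
    · simp only [mul_zero]
  have sub_one_eq (s r : ZMod N) : s - 1 = r ↔ r + 1 = s := sub_eq_iff_eq_add.trans eq_comm
  have sub_two_eq (s r : ZMod N) : s - 2 = r ↔ r + 1 + 1 = s := by
    rw [sub_eq_iff_eq_add, eq_comm, add_assoc, one_add_one_eq_two]
  have add_two_eq (s : ZMod N) : s + 2 = s + 1 + 1 := by rw [add_assoc, one_add_one_eq_two]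
  rcases α with s | s <;> rcases β with r | r <;>
    simp only [Wmat, basisPair, P1, P2, ShiftBracket.bracket, ShiftBracket.link,
      interleavedBracket, interleavedShift, interleavedKernel, inverse_mul_single leftInv hρ,
      inverse_zero leftInv, Pi.zero_apply, mul_zero, Sum.elim_inl, Sum.elim_inr,
      Matrix.one_apply, Sum.inl.injEq, Sum.inr.injEq, reduceCtorEq, if_false] <;>
    simp only [Pi.single_apply, sub_one_eq, sub_two_eq, add_two_eq, add_sub_right_comm s 1 r,
      sub_right_comm s 1 r]
  · linear_combination ν * b_pred s r
  · ring
  · ring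
  · linear_combination μ * lam * a_succ s r

/-- Interleaving `(a, b)` into one sequence on the disjoint union, as a change of coordinates. -/
def interleave (N : ℕ) :
    ((ZMod N → ℝ) × (ZMod N → ℝ)) ≃L[ℝ] (ZMod N ⊕ ZMod N → ℝ) :=
  (ContinuousLinearEquiv.sumPiEquivProdPi ℝ (ZMod N) (ZMod N) fun _ => ℝ).symm

lemma interleave_apply (w : (ZMod N → ℝ) × (ZMod N → ℝ)) :
    interleave N w = Sum.elim w.1 w.2 := by
  funext k
  rcases k with s | s <;> rfl

lemma interleave_basisPair (β : ZMod N ⊕ ZMod N) :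
    interleave N (basisPair β) = Pi.single β 1 := by
  rw [interleave_apply]
  rcases β with r | r
  · exact Sum.elim_single_zero r 1
  · exact Sum.elim_zero_single r 1

lemma fderiv_comp_sumElim_basisPair [NeZero N] (f : (ZMod N ⊕ ZMod N → ℝ) → ℝ)
    (a b : ZMod N → ℝ) (β : ZMod N ⊕ ZMod N) :
    fderiv ℝ (fun w : (ZMod N → ℝ) × (ZMod N → ℝ) => f (Sum.elim w.1 w.2)) (a, b) (basisPair β)
      = fderiv ℝ f (Sum.elim a b) (Pi.single β 1) := by
  have h := (interleave N).comp_right_fderiv (f := f) (x := (a, b))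
  rw [interleave_apply] at h
  rw [← interleave_basisPair, ← ContinuousLinearEquiv.coe_coe, ← ContinuousLinearMap.comp_apply,
    ← h]
  congr! 2

end Pencil

/-- `𝒫₁` and `𝒫₂` form a Hamiltonian pair: for all `μ, ν` the matrix
of `μ𝒫₁ + ν𝒫₂` is antisymmetric and satisfies the coordinate Jacobi identity,
where `∂/∂x_δ` is the directional derivative at `(a,b)` in the coordinate
direction `δ`. -/
theorem stmt_15 {N : ℕ} [NeZero N] (hN3 : ¬ (3 ∣ N)) (lam : ℝ)
    (R : (ZMod N → ℝ) → (ZMod N → ℝ))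
    (hR1 : ∀ (x : ZMod N → ℝ) (s : ZMod N),
      R x (s + 1) + R x s + R x (s - 1) = x s)
    (hR2 : ∀ (x : ZMod N → ℝ) (s : ZMod N),
      R (fun r => x (r + 1) + x r + x (r - 1)) s = x s)
    (μ ν : ℝ) (a b : ZMod N → ℝ) :
    (∀ α β : ZMod N ⊕ ZMod N,
      Wmat lam μ ν R a b α β = - Wmat lam μ ν R a b β α) ∧
    (∀ α β γ : ZMod N ⊕ ZMod N,
      ∑ δ : ZMod N ⊕ ZMod N,
        (Wmat lam μ ν R a b δ α *
            fderiv ℝ (fun w : (ZMod N → ℝ) × (ZMod N → ℝ) =>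
              Wmat lam μ ν R w.1 w.2 β γ) (a, b) (basisPair δ)
         + Wmat lam μ ν R a b δ β *
            fderiv ℝ (fun w : (ZMod N → ℝ) × (ZMod N → ℝ) =>
              Wmat lam μ ν R w.1 w.2 γ α) (a, b) (basisPair δ)
         + Wmat lam μ ν R a b δ γ *
            fderiv ℝ (fun w : (ZMod N → ℝ) × (ZMod N → ℝ) =>
              Wmat lam μ ν R w.1 w.2 α β) (a, b) (basisPair δ)) = 0) := by
  have leftInv : Function.LeftInverse R neighborSum := fun x => funext (hR2 x)
  have rightInv : Function.RightInverse R neighborSum := fun x => funext (hR1 x)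
  have green := isEvenGreenFunction_inverse_single leftInv rightInv
  let P := interleavedBracket green lam μ ν
  have fderiv_bracket (β γ δ : ZMod N ⊕ ZMod N) :=
    fderiv_comp_sumElim_basisPair (fun c => P.bracket c β γ) a b δ
  simp only [Wmat_eq_bracket leftInv green, P, fderiv_bracket]
  exact ⟨P.bracket_antisymm _, P.sum_bracket_mul_fderiv_bracket _⟩
end

section
/- The vector field τ is a master symmetry of the lattice W_{n+1}-system Q⁰: the double Lie bracket vanishes identically, [Q⁰, [Q⁰, τ]](u) = 0 for every u : ℤ → (Fin n → ℝ). -/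
/-- The lattice `W_{n+1}`-algebra flow `Q⁰` on maps `u : ℤ → Fin n → ℝ`
(paper components `i = 1,…,n` correspond to Lean indices `0,…,n-1`, and the
convention `u^{n+1} := u^1` is realized by the index `(i+1) % n`):
`Q⁰(u)^1_s = −u^1_s (u^2_{s+n} − u^2_{s−1})`,
`Q⁰(u)^i_s = u^{i+1}_s − u^{i+1}_{s−1} − u^i_s (u^2_{s+i−1} − u^2_{s−1})`,
`i = 2,…,n`. -/
noncomputable def Q0 {n : ℕ} (u : ℤ → Fin n → ℝ) : ℤ → Fin n → ℝ := fun s i =>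
  let hpos : 0 < n := lt_of_le_of_lt (Nat.zero_le _) i.isLt
  let i1 : Fin n := ⟨1 % n, Nat.mod_lt 1 hpos⟩
  let inxt : Fin n := ⟨((i : ℕ) + 1) % n, Nat.mod_lt _ hpos⟩
  if (i : ℕ) = 0 then
    -(u s i) * (u (s + (n : ℤ)) i1 - u (s - 1) i1)
  else
    u s inxt - u (s - 1) inxt
      - u s i * (u (s + ((i : ℕ) : ℤ)) i1 - u (s - 1) i1)

/-- The master symmetry `τ`:
`τ(u)^1_s = s·Q⁰(u)^1_s − u^1_s ((n+1)u^2_{s+n} + Σ_{l=0}^{n} u^2_{s+l})`,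
`τ(u)^i_s = s·Q⁰(u)^i_s − u^i_s (i·u^2_{s+i−1} + Σ_{l=0}^{i−1} u^2_{s+l})
  + (i+1)u^{i+1}_s`, `i = 2,…,n` (with `u^{n+1} := u^1`). -/
noncomputable def TauVF {n : ℕ} (u : ℤ → Fin n → ℝ) : ℤ → Fin n → ℝ := fun s i =>
  let hpos : 0 < n := lt_of_le_of_lt (Nat.zero_le _) i.isLt
  let i1 : Fin n := ⟨1 % n, Nat.mod_lt 1 hpos⟩
  let inxt : Fin n := ⟨((i : ℕ) + 1) % n, Nat.mod_lt _ hpos⟩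
  if (i : ℕ) = 0 then
    (s : ℝ) * Q0 u s i
      - u s i * (((n : ℝ) + 1) * u (s + (n : ℤ)) i1
          + ∑ l ∈ Finset.range (n + 1), u (s + (l : ℤ)) i1)
  else
    (s : ℝ) * Q0 u s i
      - u s i * ((((i : ℕ) : ℝ) + 1) * u (s + ((i : ℕ) : ℤ)) i1
          + ∑ l ∈ Finset.range ((i : ℕ) + 1), u (s + (l : ℤ)) i1)
      + (((i : ℕ) : ℝ) + 2) * u s inxt

/-- The partial derivative `∂F/∂u^j_r` of a function of the lattice variables,
taken at the point `u`. -/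
noncomputable def pderivAt {n : ℕ} (F : (ℤ → Fin n → ℝ) → ℝ)
    (u : ℤ → Fin n → ℝ) (r : ℤ) (j : Fin n) : ℝ :=
  deriv (fun t : ℝ => F (Function.update u r (Function.update (u r) j t))) (u r j)

/-- The Lie bracket of two vector fields on the space of maps `ℤ → Fin n → ℝ`,
defined componentwise by the (finitely supported) sum
`[X,Y](u)^i_s = Σ_{(r,j)} ( ∂Y^i_s/∂u^j_r · X^j_r − ∂X^i_s/∂u^j_r · Y^j_r )`. -/
noncomputable def lieBr {n : ℕ}
    (X Y : (ℤ → Fin n → ℝ) → ℤ → Fin n → ℝ)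
    (u : ℤ → Fin n → ℝ) : ℤ → Fin n → ℝ := fun s i =>
  ∑ᶠ r : ℤ, ∑ j : Fin n,
    (pderivAt (fun w => Y w s i) u r j * X u r j
      - pderivAt (fun w => X w s i) u r j * Y u r j)

/-! Put `v_0 = 1`, `v_k = u^{k+1}` for `1 ≤ k ≤ n`, and `v_k = 0` for `k > n`. Then one formula
describes all components of `Q⁰`, and one describes all components of `τ`. Both make sense for an
arbitrary family `v_k(s)` in a commutative ring, vector fields being derivations.

With `S` the shift `s ↦ s + 1` and `L = ∑ v_k S^{k+1}`, the flow `Q⁰` is `-[(L⁻¹)_{≤0}, L]`, where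
`(·)_{≤0}` keeps the nonpositive powers of `S`. The bracket `[Q⁰, τ]` turns out to be the next flow
`[(L⁻²)_{≤0}, L]` of this hierarchy, and flows of the hierarchy commute.

On the given phase space every vector field involved has polynomial components, so it is a
derivation of `MvPolynomial (ℤ × Fin n) ℝ`, and `lieBr` is the commutator of derivations.
-/

namespace LatticeW

open MvPolynomial Function

section Hierarchy

variable {A : Type*} [CommRing A]

/-- The flow `Q⁰` in the uniform coordinates `v`: the equation
`∂L = -[S⁻¹ - v_1(s - 1), L]` for `L = ∑ v_k S^{k+1}` with `v_0 = 1`. -/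
def flow (v : ℕ → ℤ → A) (k : ℕ) (s : ℤ) : A :=
  v (k + 1) s - v (k + 1) (s - 1) - v k s * (v 1 (s + k) - v 1 (s - 1))

/-- The master symmetry `τ` in the uniform coordinates `v`. -/
def master (v : ℕ → ℤ → A) (k : ℕ) (s : ℤ) : A :=
  s * flow v k s
    - v k s * ((k + 1) * v 1 (s + k) + ∑ l ∈ Finset.range (k + 1), v 1 (s + l))
    + (k + 2) * v (k + 1) s

/-- The coefficient of `S^0` in `L⁻²`, up to sign and a shift: at site `s` that coefficient is
`-density v (s - 1)`. -/
def density (v : ℕ → ℤ → A) (s : ℤ) : A :=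
  v 2 s + v 2 (s - 1) - v 1 s * (v 1 (s + 1) + v 1 s + v 1 (s - 1))

/-- The second flow `[(L⁻²)_{≤0}, L]` of the hierarchy of `flow`, where
`(L⁻²)_{≤0} = S⁻² - (v_1(s - 1) + v_1(s - 2)) S⁻¹ - density v (s - 1)`. -/
def nextFlow (v : ℕ → ℤ → A) (k : ℕ) (s : ℤ) : A :=
  v (k + 2) (s - 2) - v (k + 2) s
    + v (k + 1) s * (v 1 (s + k + 1) + v 1 (s + k))
    - v (k + 1) (s - 1) * (v 1 (s - 1) + v 1 (s - 2))
    + v k s * (density v (s + k) - density v (s - 1))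

theorem sum_range_flow_one (v : ℕ → ℤ → A) (m : ℕ) (s : ℤ) :
    ∑ l ∈ Finset.range m, flow v 1 (s + l) =
      (v 2 (s + m - 1) - v 1 (s + m - 1) * v 1 (s + m)) - (v 2 (s - 1) - v 1 (s - 1) * v 1 s) := by
  let flux (l : ℕ) : A := v 2 (s + l - 1) - v 1 (s + l - 1) * v 1 (s + l)
  have conservation_law (l : ℕ) : flow v 1 (s + l) = flux (l + 1) - flux l := by
    simp only [flow, flux]
    push_cast
    ring_nf
  rw [Finset.sum_congr rfl fun l _ => conservation_law l, Finset.sum_range_sub]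
  simp only [flux, Nat.cast_zero, add_zero]

theorem master_one (v : ℕ → ℤ → A) (s : ℤ) :
    master v 1 s =
      s * flow v 1 s - v 1 s * (3 * v 1 (s + 1) + v 1 s) + 3 * v 2 s := by
  simp only [master, Finset.sum_range_succ, Finset.sum_range_zero]
  push_cast
  ring_nf

variable {R : Type*} [CommRing R] [Algebra R A] {v : ℕ → ℤ → A} {Q T K : Derivation R A A}

theorem derivation_flow (D : Derivation R A A) (k : ℕ) (s : ℤ) :
    D (flow v k s) =
      D (v (k + 1) s) - D (v (k + 1) (s - 1))
        - (v k s * (D (v 1 (s + k)) - D (v 1 (s - 1)))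
          + (v 1 (s + k) - v 1 (s - 1)) * D (v k s)) := by
  simp only [flow, map_sub, Derivation.leibniz, smul_eq_mul]

theorem derivation_master (D : Derivation R A A) (k : ℕ) (s : ℤ) :
    D (master v k s) =
      s * D (flow v k s)
        - (v k s * ((k + 1) * D (v 1 (s + k)) + ∑ l ∈ Finset.range (k + 1), D (v 1 (s + l)))
          + ((k + 1) * v 1 (s + k) + ∑ l ∈ Finset.range (k + 1), v 1 (s + l)) * D (v k s))
        + (k + 2) * D (v (k + 1) s) := by
  have map_two : D (2 : A) = 0 := D.map_natCast 2
  simp only [master, map_sub, map_add, map_sum, Derivation.leibniz, smul_eq_mul,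
    Derivation.map_natCast, Derivation.map_intCast, Derivation.map_one_eq_zero, map_two]
  ring

theorem derivation_density (D : Derivation R A A) (s : ℤ) :
    D (density v s) =
      D (v 2 s) + D (v 2 (s - 1))
        - (v 1 s * (D (v 1 (s + 1)) + D (v 1 s) + D (v 1 (s - 1)))
          + (v 1 (s + 1) + v 1 s + v 1 (s - 1)) * D (v 1 s)) := by
  simp only [density, map_sub, map_add, Derivation.leibniz, smul_eq_mul]

theorem commutator_flow_master (hQ : ∀ k s, Q (v k s) = flow v k s)
    (hT : ∀ k s, T (v k s) = master v k s) (k : ℕ) (s : ℤ) :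
    ⁅Q, T⁆ (v k s) = nextFlow v k s := by
  have sum_succ : ∑ l ∈ Finset.range (k + 1 + 1), v 1 (s + l) =
      ∑ l ∈ Finset.range (k + 1), v 1 (s + l) + v 1 (s + k + 1) := by
    rw [Finset.sum_range_succ]
    push_cast
    ring_nf
  have sum_pred : ∑ l ∈ Finset.range (k + 1 + 1), v 1 (s - 1 + l) =
      ∑ l ∈ Finset.range (k + 1), v 1 (s + l) + v 1 (s - 1) := by
    rw [Finset.sum_range_succ']
    push_cast
    ring_nf
  rw [Derivation.commutator_apply, hT, hQ, derivation_master, derivation_flow, derivation_flow]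
  simp only [hQ, hT, sum_range_flow_one, master_one]
  simp only [master, flow, nextFlow, density, sum_succ, sum_pred]
  generalize ∑ l ∈ Finset.range (k + 1), v 1 (s + l) = partialSum
  push_cast
  ring_nf

theorem commutator_flow_nextFlow (hQ : ∀ k s, Q (v k s) = flow v k s)
    (hK : ∀ k s, K (v k s) = nextFlow v k s) (k : ℕ) (s : ℤ) :
    ⁅Q, K⁆ (v k s) = 0 := by
  rw [Derivation.commutator_apply, hK, hQ, derivation_flow]
  simp only [nextFlow, map_sub, map_add, Derivation.leibniz, smul_eq_mul, derivation_density,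
    hQ, hK]
  simp only [flow, density]
  push_cast
  ring_nf

theorem commutator_flow_commutator_flow_master (hQ : ∀ k s, Q (v k s) = flow v k s)
    (hT : ∀ k s, T (v k s) = master v k s) (k : ℕ) (s : ℤ) :
    ⁅Q, ⁅Q, T⁆⁆ (v k s) = 0 :=
  commutator_flow_nextFlow hQ (commutator_flow_master hQ hT) k s

end Hierarchy

section Coordinates

variable {n : ℕ} [NeZero n] {R : Type*} [CommRing R]

variable (n R) in
/-- The uniform coordinates `v_k(s)` on the phase space: `v_0 = 1`, `v_k = u^{k+1}` for
`1 ≤ k ≤ n` (with `u^{n+1} = u^1`, that is, Lean index `k % n`), and `v_k = 0` for `k > n`. -/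
noncomputable def coord (k : ℕ) (s : ℤ) : MvPolynomial (ℤ × Fin n) R :=
  if k = 0 then 1 else if k ≤ n then X (s, Fin.ofNat n k) else 0

/-- The `k` with `1 ≤ k ≤ n` for which `v_k` is the component with Lean index `i`. -/
def level (i : Fin n) : ℕ := if i = 0 then n else i

@[simp]
theorem coord_zero (s : ℤ) : coord n R 0 s = 1 := if_pos rfl

theorem coord_of_le {k : ℕ} (hk : k ≠ 0) (hkn : k ≤ n) (s : ℤ) :
    coord n R k s = X (s, Fin.ofNat n k) := by
  rw [coord, if_neg hk, if_pos hkn]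

theorem coord_of_lt {k : ℕ} (hk : n < k) (s : ℤ) : coord n R k s = 0 := by
  rw [coord, if_neg (by omega), if_neg (by omega)]

theorem level_ofNat {k : ℕ} (hk : k ≠ 0) (hkn : k ≤ n) : level (Fin.ofNat n k) = k := by
  rcases hkn.lt_or_eq with hlt | rfl
  · simp [level, Fin.ext_iff, Nat.mod_eq_of_lt hlt, hk]
  · simp [level]

theorem coord_level (s : ℤ) (i : Fin n) : coord n R (level i) s = X (s, i) := by
  by_cases hi : i = 0
  · simp [level, hi, coord_of_le (NeZero.ne n) le_rfl]
  · have hi' : (i : ℕ) ≠ 0 := Fin.val_ne_zero_iff.mpr hi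
    simp [level, hi, coord_of_le hi' i.isLt.le]

/-- The derivation `v_k(s) ↦ F k s`, for `F` compatible with the truncation of the
coordinates (see `derivationOfCoord_coord`). -/
noncomputable def derivationOfCoord (F : ℕ → ℤ → MvPolynomial (ℤ × Fin n) R) :
    Derivation R (MvPolynomial (ℤ × Fin n) R) (MvPolynomial (ℤ × Fin n) R) :=
  mkDerivation R fun x => F (level x.2) x.1

theorem derivationOfCoord_coord {F : ℕ → ℤ → MvPolynomial (ℤ × Fin n) R}
    (hF_zero : ∀ s, F 0 s = 0) (hF_lt : ∀ k, n < k → ∀ s, F k s = 0) (k : ℕ) (s : ℤ) :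
    derivationOfCoord F (coord n R k s) = F k s := by
  rcases eq_or_ne k 0 with rfl | hk
  · rw [coord_zero, Derivation.map_one_eq_zero, hF_zero]
  rcases le_or_gt k n with hkn | hkn
  · rw [coord_of_le hk hkn, derivationOfCoord, mkDerivation_X, level_ofNat hk hkn]
  · rw [coord_of_lt hkn, map_zero, hF_lt k hkn]

theorem derivationOfCoord_flow_coord (k : ℕ) (s : ℤ) :
    derivationOfCoord (flow (coord n R)) (coord n R k s) = flow (coord n R) k s := by
  refine derivationOfCoord_coord (fun s => ?_) (fun k hk s => ?_) k s
  · simp [flow]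
  · simp [flow, coord_of_lt hk, coord_of_lt (hk.trans k.lt_succ_self)]

theorem derivationOfCoord_master_coord (k : ℕ) (s : ℤ) :
    derivationOfCoord (master (coord n R)) (coord n R k s) = master (coord n R) k s := by
  refine derivationOfCoord_coord (fun s => ?_) (fun k hk s => ?_) k s
  · simp only [master, flow, coord_zero, Nat.cast_zero, Finset.sum_range_one, add_zero, zero_add]
    ring
  · simp [master, flow, coord_of_lt hk, coord_of_lt (hk.trans k.lt_succ_self)]

theorem commutator_derivationOfCoord_flow_master :
    ⁅derivationOfCoord (flow (coord n R)),
      ⁅derivationOfCoord (flow (coord n R)), derivationOfCoord (master (coord n R))⁆⁆ = 0 := by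
  refine derivation_ext fun x => ?_
  rw [← coord_level, Derivation.zero_apply]
  exact commutator_flow_commutator_flow_master derivationOfCoord_flow_coord
    derivationOfCoord_master_coord _ _

end Coordinates

section Derivations

theorem derivation_eq_sum_pderiv {σ R : Type*} [CommSemiring R]
    (D : Derivation R (MvPolynomial σ R) (MvPolynomial σ R)) {p : MvPolynomial σ R}
    {t : Finset σ} (ht : p.vars ⊆ t) : D p = ∑ x ∈ t, pderiv x p * D (X x) := by
  classical
  let E : Derivation R (MvPolynomial σ R) (MvPolynomial σ R) := ∑ x ∈ t, D (X x) • pderiv x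
  have E_apply (q : MvPolynomial σ R) : E q = ∑ x ∈ t, pderiv x q * D (X x) := by
    have coe_E : ⇑E = ∑ x ∈ t, ⇑(D (X x) • pderiv x) := map_sum Derivation.coeFnAddMonoidHom _ _
    simp [coe_E, mul_comm]
  rw [← E_apply]
  refine derivation_eq_of_forall_mem_vars fun x hx => ?_
  simp [E_apply, pderiv_X, Pi.single_apply, ht hx]

theorem hasDerivAt_eval_update {σ 𝕜 : Type*} [DecidableEq σ] [NontriviallyNormedField 𝕜]
    (p : MvPolynomial σ 𝕜) (a : σ → 𝕜) (x : σ) (t : 𝕜) :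
    HasDerivAt (fun t => eval (update a x t) p) (eval (update a x t) (pderiv x p)) t := by
  induction p using MvPolynomial.induction_on with
  | C c => simpa using hasDerivAt_const t c
  | add p q hp hq => simpa using hp.fun_add hq
  | mul_X p y hp =>
    have hX : HasDerivAt (fun t => update a x t y) ((Pi.single x 1 : σ → 𝕜) y) t := by
      exact hasDerivAt_pi.mp (hasDerivAt_update a x t) y
    simp only [map_mul, eval_X]
    refine (hp.fun_mul hX).congr_deriv ?_
    rcases eq_or_ne y x with rfl | hyx
    · simp [add_comm, mul_comm]
    · simp [pderiv_X_of_ne hyx, hyx, mul_comm]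

variable {n : ℕ}

/-- The vector field on the phase space that a derivation of the ring of polynomial functions
represents. -/
noncomputable def vectorField
    (D : Derivation ℝ (MvPolynomial (ℤ × Fin n) ℝ) (MvPolynomial (ℤ × Fin n) ℝ))
    (u : ℤ → Fin n → ℝ) (s : ℤ) (i : Fin n) : ℝ :=
  eval (uncurry u) (D (X (s, i)))

theorem pderivAt_eval_uncurry (p : MvPolynomial (ℤ × Fin n) ℝ) (u : ℤ → Fin n → ℝ) (r : ℤ)
    (j : Fin n) :
    pderivAt (fun w => eval (uncurry w) p) u r j = eval (uncurry u) (pderiv (r, j) p) := by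
  have h := (hasDerivAt_eval_update p (uncurry u) (r, j) (uncurry u (r, j))).deriv
  rw [update_eq_self] at h
  simpa only [pderivAt, uncurry_update_update, uncurry_apply_pair] using h

theorem lieBr_vectorField
    (D E : Derivation ℝ (MvPolynomial (ℤ × Fin n) ℝ) (MvPolynomial (ℤ × Fin n) ℝ)) :
    lieBr (vectorField D) (vectorField E) = vectorField ⁅D, E⁆ := by
  classical
  funext u s i
  let p := D (X (s, i))
  let q := E (X (s, i))
  let summand (x : ℤ × Fin n) : ℝ :=
    eval (uncurry u) (pderiv x q * D (X x) - pderiv x p * E (X x))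
  have support_summand : support summand ⊆ ↑(q.vars ∪ p.vars) := by
    intro x hx
    contrapose! hx
    simp only [Finset.coe_union, Set.mem_union, Finset.mem_coe, not_or] at hx
    simp [summand, pderiv_eq_zero_of_notMem_vars hx.1, pderiv_eq_zero_of_notMem_vars hx.2]
  calc lieBr (vectorField D) (vectorField E) u s i
      = ∑ᶠ r, ∑ j, summand (r, j) := by
        simp only [lieBr, vectorField, pderivAt_eval_uncurry, summand, map_sub, map_mul, p, q]
    _ = ∑ᶠ x, summand x := by
        simp only [finsum_curry summand ((Finset.finite_toSet _).subset support_summand),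
          finsum_eq_sum_of_fintype]
    _ = ∑ x ∈ q.vars ∪ p.vars, summand x := finsum_eq_sum_of_support_subset _ support_summand
    _ = eval (uncurry u) (D q - E p) := by
        rw [derivation_eq_sum_pderiv D Finset.subset_union_left,
          derivation_eq_sum_pderiv E Finset.subset_union_right, ← Finset.sum_sub_distrib, map_sum]
    _ = vectorField ⁅D, E⁆ u s i := by rw [vectorField, Derivation.commutator_apply]

end Derivations

section VectorFields

variable {n : ℕ} [NeZero n]

theorem vectorField_derivationOfCoord (F : ℕ → ℤ → MvPolynomial (ℤ × Fin n) ℝ)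
    (u : ℤ → Fin n → ℝ) (s : ℤ) (i : Fin n) :
    vectorField (derivationOfCoord F) u s i = eval (uncurry u) (F (level i) s) := by
  rw [vectorField, derivationOfCoord, mkDerivation_X]

theorem eval_coord_of_le (u : ℤ → Fin n → ℝ) {k : ℕ} (hk : k ≠ 0) (hkn : k ≤ n) (s : ℤ) :
    eval (uncurry u) (coord n ℝ k s) = u s (Fin.ofNat n k) := by
  rw [coord_of_le hk hkn, eval_X, uncurry_apply_pair]

theorem eval_coord_level (u : ℤ → Fin n → ℝ) (s : ℤ) (i : Fin n) :
    eval (uncurry u) (coord n ℝ (level i) s) = u s i := by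
  rw [coord_level, eval_X, uncurry_apply_pair]

theorem Q0_eq_vectorField : Q0 = vectorField (derivationOfCoord (flow (coord n ℝ))) := by
  funext u s i
  have eval_one := eval_coord_of_le u one_ne_zero (NeZero.one_le (n := n))
  have eval_succ := eval_coord_of_le u (Nat.succ_ne_zero i) i.isLt
  rw [vectorField_derivationOfCoord]
  simp only [flow, map_sub, map_mul, eval_coord_level, eval_one]
  rcases eq_or_ne i 0 with rfl | hi
  · simp [Q0, level, coord_of_lt n.lt_succ_self, Fin.ofNat]
  · simp [Q0, level, hi, eval_succ, Fin.ofNat]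

theorem TauVF_eq_vectorField :
    TauVF = vectorField (derivationOfCoord (master (coord n ℝ))) := by
  funext u s i
  have eval_one := eval_coord_of_le u one_ne_zero (NeZero.one_le (n := n))
  have eval_succ := eval_coord_of_le u (Nat.succ_ne_zero i) i.isLt
  have eval_flow : eval (uncurry u) (flow (coord n ℝ) (level i) s) = Q0 u s i := by
    rw [Q0_eq_vectorField, vectorField_derivationOfCoord]
  rw [vectorField_derivationOfCoord]
  simp only [master, map_sub, map_add, map_mul, map_sum, map_natCast, map_intCast, map_one,
    eval_flow, eval_coord_level, eval_one]
  rcases eq_or_ne i 0 with rfl | hi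
  · simp [TauVF, level, coord_of_lt n.lt_succ_self, Fin.ofNat]
  · simp [TauVF, level, hi, eval_succ, Fin.ofNat]

end VectorFields

end LatticeW

/-- `τ` is a master symmetry of the lattice `W_{n+1}`-system `Q⁰`:
`[Q⁰, [Q⁰, τ]] = 0` identically. -/
theorem stmt_19 {n : ℕ} (hn : 2 ≤ n) (u : ℤ → Fin n → ℝ) (s : ℤ) (i : Fin n) :
    lieBr Q0 (lieBr Q0 TauVF) u s i = 0 := by
  have : NeZero n := ⟨by omega⟩
  rw [LatticeW.TauVF_eq_vectorField, LatticeW.Q0_eq_vectorField, LatticeW.lieBr_vectorField,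
    LatticeW.lieBr_vectorField, LatticeW.commutator_derivationOfCoord_flow_master]
  simp [LatticeW.vectorField]
end
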